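/- Let D′ ⋐ D ⊂ ℝ^{2n+1} be bounded open sets, let s ≥ 2n + 3 be an integer, and let C₀ > 0. Then there exists a constant C > 0 such that for every smooth function f : cl(D) → ℝ satisfying f(x) ≥ 1/C₀ for all x ∈ cl(D′), one has ‖1/f‖_{D′,s} ≤ C (1 + ‖f‖_{D,s})^s. -/

import Mathlib

open MeasureTheory Bornology

noncomputable section

variable {E : Type*} [NormedAddCommGroup E] [NormedSpace ℝ E]

/-- The standard contact form `η₀ = dx^{2n+1} - Σ x^{n+j} dx^j` on `ℝ^{2n+1}`
(0-indexed coordinates): `η₀(x)(v) = v_{2n} - Σ_{j<n} x_{n+j} v_j`. -/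
def eta0 (n : ℕ) (x v : Fin (2*n+1) → ℝ) : ℝ :=
  v ⟨2*n, by omega⟩ -
    ∑ j : Fin n, x ⟨n + j, by have := j.2; omega⟩ * v ⟨j, by have := j.2; omega⟩

/-- `dη₀ = Σ_{j<n} dx^j ∧ dx^{n+j}`. -/
def dEta0 (n : ℕ) (u v : Fin (2*n+1) → ℝ) : ℝ :=
  ∑ j : Fin n,
    (u ⟨j, by have := j.2; omega⟩ * v ⟨n + j, by have := j.2; omega⟩ -
     u ⟨n + j, by have := j.2; omega⟩ * v ⟨j, by have := j.2; omega⟩)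

/-- The horizontal vector fields: for `j < n`, `X_j = ∂_j + x_{n+j} ∂_{2n}`;
for `n ≤ j < 2n`, `X_j = ∂_j` (0-indexed). -/
def Xvec (n : ℕ) (j : Fin (2*n)) (x : Fin (2*n+1) → ℝ) : Fin (2*n+1) → ℝ :=
  if h : (j : ℕ) < n then
    (Pi.single (⟨j, by omega⟩ : Fin (2*n+1)) 1 : Fin (2*n+1) → ℝ)
      + x ⟨n + j, by omega⟩ • (Pi.single (⟨2*n, by omega⟩ : Fin (2*n+1)) 1 : Fin (2*n+1) → ℝ)
  else
    (Pi.single (⟨j, by have := j.2; omega⟩ : Fin (2*n+1)) 1 : Fin (2*n+1) → ℝ)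

/-- The horizontal derivative `X_j f`. -/
def hDeriv (n : ℕ) (j : Fin (2*n)) (f : (Fin (2*n+1) → ℝ) → E)
    (x : Fin (2*n+1) → ℝ) : E :=
  fderiv ℝ f x (Xvec n j x)

/-- Iterated horizontal derivative `X_I f = X_{i₁} ⋯ X_{i_t} f`. -/
def XI (n : ℕ) : List (Fin (2*n)) → ((Fin (2*n+1) → ℝ) → E) → ((Fin (2*n+1) → ℝ) → E)
  | [], f => f
  | j :: I, f => hDeriv n j (XI n I f)

/-- Squared Folland–Stein norm `‖f‖_{D,s}² = Σ_{|I| ≤ s} ∫_D ‖X_I f‖²`. -/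
def fsNormSq (n : ℕ) (D : Set (Fin (2*n+1) → ℝ)) (s : ℕ)
    (f : (Fin (2*n+1) → ℝ) → E) : ℝ :=
  ∑ t ∈ Finset.range (s+1), ∑ I : Fin t → Fin (2*n),
    ∫ x in D, ‖XI n (List.ofFn I) f x‖^2

/-- The Folland–Stein norm `‖f‖_{D,s}`. -/
def fsNorm (n : ℕ) (D : Set (Fin (2*n+1) → ℝ)) (s : ℕ)
    (f : (Fin (2*n+1) → ℝ) → E) : ℝ :=
  Real.sqrt (fsNormSq n D s f)

/-- Ordinary partial derivative `∂_i f`. -/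
def pDeriv (n : ℕ) (i : Fin (2*n+1)) (f : (Fin (2*n+1) → ℝ) → E)
    (x : Fin (2*n+1) → ℝ) : E :=
  fderiv ℝ f x (Pi.single i 1 : Fin (2*n+1) → ℝ)

/-- Iterated ordinary partial derivative. -/
def pI (n : ℕ) : List (Fin (2*n+1)) → ((Fin (2*n+1) → ℝ) → E) → ((Fin (2*n+1) → ℝ) → E)
  | [], f => f
  | i :: I, f => pDeriv n i (pI n I f)

/-- The Reeb derivative `T₀ f = ∂_{2n} f` (0-indexed). -/
def T0Deriv (n : ℕ) (f : (Fin (2*n+1) → ℝ) → E) (x : Fin (2*n+1) → ℝ) : E :=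
  fderiv ℝ f x (Pi.single (⟨2*n, by omega⟩ : Fin (2*n+1)) 1 : Fin (2*n+1) → ℝ)

/-- `X` is a contact vector field on `D`:  `dη₀(X, X_j) + X_j(η₀(X)) = 0` for all
horizontal `X_j`. -/
def IsContactVF (n : ℕ) (D : Set (Fin (2*n+1) → ℝ))
    (X : (Fin (2*n+1) → ℝ) → (Fin (2*n+1) → ℝ)) : Prop :=
  ∀ j : Fin (2*n), ∀ x ∈ D,
    dEta0 n (X x) (Xvec n j x) + hDeriv n j (fun y => eta0 n y (X y)) x = 0

/-- The contact vector field with generating function `g`: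
`X_g = g T₀ + Σ_j (-(X_{n+j} g) X_j + (X_j g) X_{n+j})`. -/
def genVF (n : ℕ) (g : (Fin (2*n+1) → ℝ) → ℝ) (x : Fin (2*n+1) → ℝ) :
    Fin (2*n+1) → ℝ :=
  g x • (Pi.single (⟨2*n, by omega⟩ : Fin (2*n+1)) 1 : Fin (2*n+1) → ℝ)
  + ∑ j : Fin n,
      (-(hDeriv n (⟨n + j, by have := j.2; omega⟩ : Fin (2*n)) g x) •
          Xvec n (⟨j, by have := j.2; omega⟩ : Fin (2*n)) x
        + (hDeriv n (⟨j, by have := j.2; omega⟩ : Fin (2*n)) g x) •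
          Xvec n (⟨n + j, by have := j.2; omega⟩ : Fin (2*n)) x)


namespace FS
open Set Filter Topology

abbrev Vn (n : ℕ) := Fin (2*n+1) → ℝ
abbrev Sm : WithTop ℕ∞ := ((⊤:ℕ∞) : WithTop ℕ∞)

lemma Xvec_contDiff (n : ℕ) (j : Fin (2*n)) {k : WithTop ℕ∞} : ContDiff ℝ k (Xvec n j) := by
  unfold Xvec
  by_cases h : (j:ℕ) < n
  · simp only [h, dif_pos]
    fun_prop
  · simp only [h, dif_neg, not_false_eq_true]
    fun_prop

lemma hDeriv_contDiffOn {n : ℕ} (j : Fin (2*n)) {a : Vn n → ℝ} {U : Set (Vn n)}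
    (hU : IsOpen U) (ha : ContDiffOn ℝ Sm a U) : ContDiffOn ℝ Sm (hDeriv n j a) U := by
  have h1 : ContDiffOn ℝ Sm (fderiv ℝ a) U := ha.fderiv_of_isOpen hU (by simp [Sm])
  exact h1.clm_apply (Xvec_contDiff n j).contDiffOn

lemma XI_contDiffOn {n : ℕ} (I : List (Fin (2*n))) {a : Vn n → ℝ} {U : Set (Vn n)}
    (hU : IsOpen U) (ha : ContDiffOn ℝ Sm a U) : ContDiffOn ℝ Sm (XI n I a) U := by
  induction I with
  | nil => exact ha
  | cons j I ih => exact hDeriv_contDiffOn j hU ih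

lemma XI_contDiff {n : ℕ} (I : List (Fin (2*n))) {a : Vn n → ℝ}
    (ha : ContDiff ℝ Sm a) : ContDiff ℝ Sm (XI n I a) := by
  rw [← contDiffOn_univ] at *
  exact XI_contDiffOn I isOpen_univ ha

lemma hDeriv_congr {n : ℕ} (j : Fin (2*n)) {a b : Vn n → ℝ} {U : Set (Vn n)}
    (hU : IsOpen U) (hab : EqOn a b U) : EqOn (hDeriv n j a) (hDeriv n j b) U := by
  intro x hx
  have : a =ᶠ[𝓝 x] b := hab.eventuallyEq_of_mem (hU.mem_nhds hx)
  simp only [hDeriv, this.fderiv_eq]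

lemma XI_congr {n : ℕ} (I : List (Fin (2*n))) {a b : Vn n → ℝ} {U : Set (Vn n)}
    (hU : IsOpen U) (hab : EqOn a b U) : EqOn (XI n I a) (XI n I b) U := by
  induction I with
  | nil => exact hab
  | cons j I ih => exact hDeriv_congr j hU ih

lemma XI_append {n : ℕ} (I J : List (Fin (2*n))) (a : Vn n → ℝ) :
    XI n (I ++ J) a = XI n I (XI n J a) := by
  induction I with
  | nil => rfl
  | cons j I ih => simp only [List.cons_append, XI, ih]

lemma hDeriv_mul {n : ℕ} (j : Fin (2*n)) {a b : Vn n → ℝ} {x : Vn n}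
    (ha : DifferentiableAt ℝ a x) (hb : DifferentiableAt ℝ b x) :
    hDeriv n j (fun y => a y * b y) x = hDeriv n j a x * b x + a x * hDeriv n j b x := by
  simp only [hDeriv]
  rw [fderiv_fun_mul ha hb]
  simp; ring

lemma hDeriv_add {n : ℕ} (j : Fin (2*n)) {a b : Vn n → ℝ} {x : Vn n}
    (ha : DifferentiableAt ℝ a x) (hb : DifferentiableAt ℝ b x) :
    hDeriv n j (fun y => a y + b y) x = hDeriv n j a x + hDeriv n j b x := by
  simp only [hDeriv]
  rw [fderiv_fun_add ha hb]
  simp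

lemma hDeriv_cmul {n : ℕ} (j : Fin (2*n)) (c : ℝ) (a : Vn n → ℝ) :
    hDeriv n j (fun y => c * a y) = fun x => c * hDeriv n j a x := by
  funext x
  simp only [hDeriv]
  have h2 : (fun y => c * a y) = c • a := by funext y; simp
  rw [h2, fderiv_const_smul_field]; simp

lemma XI_cmul {n : ℕ} (I : List (Fin (2*n))) (c : ℝ) (a : Vn n → ℝ) :
    XI n I (fun y => c * a y) = fun x => c * XI n I a x := by
  induction I with
  | nil => rfl
  | cons j I ih => simp only [XI, ih, hDeriv_cmul]

lemma XI_sub {n : ℕ} (I : List (Fin (2*n))) {a b : Vn n → ℝ}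
    (ha : ContDiff ℝ Sm a) (hb : ContDiff ℝ Sm b) :
    XI n I (fun y => a y - b y) = fun x => XI n I a x - XI n I b x := by
  induction I with
  | nil => rfl
  | cons j I ih =>
    simp only [XI, ih]
    funext x
    have h1 := ((XI_contDiff I ha).differentiable (by simp [Sm])) x
    have h2 := ((XI_contDiff I hb).differentiable (by simp [Sm])) x
    simp only [hDeriv]
    rw [fderiv_fun_sub h1 h2]; simp

lemma XI_const {n : ℕ} (I : List (Fin (2*n))) (hI : I ≠ []) (c : ℝ) :
    XI n I (fun _ : Vn n => c) = fun _ => 0 := by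
  induction I with
  | nil => exact absurd rfl hI
  | cons j I ih =>
    rcases eq_or_ne I [] with rfl | h
    · funext x; simp [XI, hDeriv]
    · simp only [XI, ih h]; funext x; simp [hDeriv]

lemma hDeriv_tsupport {n : ℕ} (j : Fin (2*n)) (a : Vn n → ℝ) :
    tsupport (hDeriv n j a) ⊆ tsupport a := by
  apply closure_minimal _ (isClosed_tsupport a)
  intro x hx
  by_contra h
  apply hx
  have : a =ᶠ[𝓝 x] 0 := notMem_tsupport_iff_eventuallyEq.mp h
  simp [hDeriv, this.fderiv_eq]

lemma XI_tsupport {n : ℕ} (I : List (Fin (2*n))) (a : Vn n → ℝ) :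
    tsupport (XI n I a) ⊆ tsupport a := by
  induction I with
  | nil => exact le_rfl
  | cons j I ih => exact (hDeriv_tsupport j _).trans ih

lemma XI_hcs {n : ℕ} (I : List (Fin (2*n))) {a : Vn n → ℝ} (ha : HasCompactSupport a) :
    HasCompactSupport (XI n I a) :=
  ha.of_isClosed_subset (isClosed_tsupport _) (XI_tsupport I a)

/-- Leibniz rule. -/
lemma leibniz {n : ℕ} (I : List (Fin (2*n))) :
    ∃ L : List (List (Fin (2*n)) × List (Fin (2*n))), L.length ≤ 2 ^ I.length - 1 ∧
      (∀ p ∈ L, p.1.length < I.length ∧ p.1.length + p.2.length = I.length) ∧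
      ∀ (U : Set (Vn n)) (a b : Vn n → ℝ), IsOpen U → ContDiffOn ℝ Sm a U →
        ContDiffOn ℝ Sm b U → ∀ x ∈ U, XI n I (fun y => a y * b y) x =
          XI n I a x * b x + (L.map (fun p => XI n p.1 a x * XI n p.2 b x)).sum := by
  induction I with
  | nil => exact ⟨[], by simp, by simp, by intros; simp [XI]⟩
  | cons j I ih =>
    obtain ⟨L, hl, hL, h⟩ := ih
    refine ⟨(I, [j]) :: (L.map (fun p => (j :: p.1, p.2)) ++ L.map (fun p => (p.1, j :: p.2))),
      ?_, ?_, ?_⟩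
    · have := Nat.one_le_two_pow (n := I.length)
      simp [pow_succ]; omega
    · intro p hp
      simp only [List.mem_cons, List.mem_append, List.mem_map] at hp
      rcases hp with rfl | ⟨q, hq, rfl⟩ | ⟨q, hq, rfl⟩
      · simp
      · have := hL q hq; simp; omega
      · have := hL q hq; simp; omega
    · intro U a b hU ha hb x hx
      have hda : ∀ J, DifferentiableAt ℝ (XI n J a) x := fun J =>
        ((XI_contDiffOn J hU ha).differentiableOn (by simp [Sm])).differentiableAt (hU.mem_nhds hx)
      have hdb : ∀ J, DifferentiableAt ℝ (XI n J b) x := fun J =>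
        ((XI_contDiffOn J hU hb).differentiableOn (by simp [Sm])).differentiableAt (hU.mem_nhds hx)
      have e := hDeriv_congr j hU (fun y hy => h U a b hU ha hb y hy) hx
      simp only [XI]
      rw [e]
      have hb0 : DifferentiableAt ℝ b x := hdb []
      have key : ∀ M : List (List (Fin (2*n)) × List (Fin (2*n))),
          DifferentiableAt ℝ (fun y => (M.map (fun p => XI n p.1 a y * XI n p.2 b y)).sum) x ∧
          hDeriv n j (fun y => (M.map (fun p => XI n p.1 a y * XI n p.2 b y)).sum) x =
          (M.map (fun p => XI n (j :: p.1) a x * XI n p.2 b x)).sum +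
          (M.map (fun p => XI n p.1 a x * XI n (j :: p.2) b x)).sum := by
        intro M
        induction M with
        | nil => simp [hDeriv]
        | cons q M ihM =>
          simp only [List.map_cons, List.sum_cons]
          have hd := (hda q.1).fun_mul (hdb q.2)
          refine ⟨hd.fun_add ihM.1, ?_⟩
          rw [hDeriv_add j hd ihM.1, hDeriv_mul j (hda _) (hdb _), ihM.2]
          simp only [XI]; ring
      rw [hDeriv_add j ((hda I).fun_mul hb0) (key L).1, (key L).2]
      rw [hDeriv_mul j (hda I) hb0]
      simp only [List.map_cons, List.sum_cons, List.map_append, List.sum_append, List.map_map,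
        Function.comp_def, XI]
      ring

/-- Bounded derivatives up to the boundary. -/
lemma XI_bdd {n : ℕ} {D : Set (Vn n)} (hD : IsOpen D) (hDb : IsBounded D) {f : Vn n → ℝ}
    (hf : ContDiffOn ℝ Sm f (closure D)) (I : List (Fin (2*n))) :
    ∃ C, ∀ x ∈ D, |XI n I f x| ≤ C := by
  have hc : IsCompact (closure D) := hDb.isCompact_closure
  have key : ∀ x ∈ closure D, ∀ I : List (Fin (2*n)), ∀ k : ℕ, ∃ b : Vn n → ℝ,
      ContDiffWithinAt ℝ k b (closure D) x ∧ b =ᶠ[𝓝[D] x] XI n I f := by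
    intro x hx I
    induction I with
    | nil =>
      intro k
      exact ⟨f, (hf x hx).of_le (by unfold Sm; exact_mod_cast (le_top : (k:ℕ∞) ≤ ⊤)), by rfl⟩
    | cons j I ih =>
      intro k
      obtain ⟨b, hb, hbe⟩ := ih (k+1)
      have hb' : ContDiffWithinAt ℝ ((k:WithTop ℕ∞)+1) b (closure D) x := by exact_mod_cast hb
      obtain ⟨u, hu, -, b', hb1, hb2⟩ :=
        (contDiffWithinAt_succ_iff_hasFDerivWithinAt (by simp)).1 hb'
      rw [insert_eq_of_mem hx] at hu
      have hb3 : ContDiffWithinAt ℝ k b' (closure D) x := by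
        have := hb2.mono_of_mem_nhdsWithin hu
        exact this
      refine ⟨fun y => b' y (Xvec n j y), hb3.clm_apply (Xvec_contDiff n j).contDiffWithinAt, ?_⟩
      obtain ⟨V, hV, hxV, hVu⟩ := mem_nhdsWithin.1 hu
      obtain ⟨W, hW, hxW, hWe⟩ := mem_nhdsWithin.1 hbe
      have : V ∩ W ∩ D ∈ 𝓝[D] x :=
        mem_nhdsWithin.2 ⟨V ∩ W, hV.inter hW, ⟨hxV, hxW⟩, le_rfl⟩
      filter_upwards [this] with y hy
      have hun : u ∈ 𝓝 y := mem_of_superset ((hV.inter hD).mem_nhds ⟨hy.1.1, hy.2⟩)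
        (fun z hz => hVu ⟨hz.1, subset_closure hz.2⟩)
      have h1 : HasFDerivAt b (b' y) y :=
        (hb1 y (mem_of_mem_nhds hun)).hasFDerivAt hun
      have h2 : b =ᶠ[𝓝 y] XI n I f := mem_of_superset
        ((hW.inter hD).mem_nhds ⟨hy.1.2, hy.2⟩) hWe
      have h3 := h1.congr_of_eventuallyEq h2.symm
      simp only [XI, hDeriv, h3.fderiv]
  have : ∃ C, ∀ x ∈ closure D ∩ D, |XI n I f x| ≤ C := by
    refine hc.induction_on (p := fun s => ∃ C, ∀ x ∈ s ∩ D, |XI n I f x| ≤ C) ?_ ?_ ?_ ?_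
    · exact ⟨0, by simp⟩
    · rintro s t hst ⟨C, h⟩
      exact ⟨C, fun x hx => h x ⟨hst hx.1, hx.2⟩⟩
    · rintro s t ⟨C, h⟩ ⟨C', h'⟩
      refine ⟨max C C', ?_⟩
      rintro x ⟨hx | hx, hxD⟩
      · exact (h x ⟨hx, hxD⟩).trans (le_max_left _ _)
      · exact (h' x ⟨hx, hxD⟩).trans (le_max_right _ _)
    · intro x hx
      obtain ⟨b, hb, hbe⟩ := key x hx I 0
      have hcont : ContinuousWithinAt b (closure D) x := hb.continuousWithinAt
      have h1 : ∀ᶠ y in 𝓝[D] x, |b y| < |b x| + 1 :=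
        ((hcont.mono subset_closure).abs).eventually_lt continuousWithinAt_const (by simp)
      have h2 : ∀ᶠ y in 𝓝[D] x, |XI n I f y| ≤ |b x| + 1 := by
        filter_upwards [h1, hbe] with y hy hy'
        rw [← hy']; exact hy.le
      obtain ⟨V, hV, hxV, hVu⟩ := mem_nhdsWithin.1 h2
      exact ⟨V, mem_nhdsWithin_of_mem_nhds (hV.mem_nhds hxV), _, fun y hy => hVu hy⟩
  obtain ⟨C, h⟩ := this
  exact ⟨C, fun x hx => h x ⟨subset_closure hx, hx⟩⟩

lemma XI_intOn {n : ℕ} {D : Set (Vn n)} (hD : IsOpen D) (hDb : IsBounded D) {f : Vn n → ℝ}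
    (hf : ContDiffOn ℝ Sm f (closure D)) (I : List (Fin (2*n))) :
    IntegrableOn (fun x => ‖XI n I f x‖^2) D := by
  obtain ⟨C, hC⟩ := XI_bdd hD hDb hf I
  have hcont : ContinuousOn (XI n I f) D :=
    (XI_contDiffOn I hD (hf.mono subset_closure)).continuousOn
  refine IntegrableOn.of_bound hDb.measure_lt_top
    ((hcont.norm.pow 2).aestronglyMeasurable hD.measurableSet) (C^2) ?_
  · refine (ae_restrict_mem hD.measurableSet).mono fun x hx => ?_
    rw [Real.norm_eq_abs, abs_of_nonneg (by positivity)]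
    exact pow_le_pow_left₀ (norm_nonneg _) (hC x hx) 2

end FS

namespace FS
open Set Filter Topology

lemma two_le_Sm' : (2 : WithTop ℕ∞) ≤ Sm := by
  exact WithTop.coe_le_coe.2 (le_top : (2:ℕ∞) ≤ ⊤)

lemma two_le_Sm : (1 + 1 : WithTop ℕ∞) ≤ Sm := by
  rw [one_add_one_eq_two]; exact two_le_Sm'

lemma line_bound {n : ℕ} {F : Vn n → ℝ} (hF : ContDiff ℝ Sm F) (hc : HasCompactSupport F)
    {v : Vn n} (hv : v ≠ 0) (z : Vn n) :
    ‖F z‖ₑ ≤ ∫⁻ s : ℝ, ‖fderiv ℝ F (z + s • v) v‖ₑ := by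
  have hd : ∀ s : ℝ, HasDerivAt (fun s : ℝ => z + s • v) v s := by
    intro s
    simpa using ((hasDerivAt_id s).smul_const v).const_add z
  have h1 : ContDiff ℝ 1 (fun s : ℝ => F (z + s • v)) :=
    (hF.of_le (by simp [Sm])).comp (by fun_prop)
  have h2 : HasCompactSupport (fun s : ℝ => F (z + s • v)) := by
    have he : IsClosedEmbedding (fun s : ℝ => z + s • v) :=
      (Homeomorph.addLeft z).isClosedEmbedding.comp (isClosedEmbedding_smul_left hv)
    exact hc.comp_isClosedEmbedding he
  have h3 := HasCompactSupport.enorm_le_lintegral_Ici_deriv h1 h2 0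
  simp only [zero_smul, add_zero] at h3
  refine h3.trans ((setLIntegral_le_lintegral _ _).trans (le_of_eq ?_))
  congr 1
  funext s
  have : HasDerivAt (fun s : ℝ => F (z + s • v)) (fderiv ℝ F (z + s • v) v) s :=
    ((hF.differentiable (by simp [Sm])) (z + s • v)).hasFDerivAt.comp_hasDerivAt s (hd s)
  rw [this.deriv]

abbrev lm {n : ℕ} (S : Finset (Fin (2*n+1))) (f : Vn n → ENNReal) : Vn n → ENNReal :=
  lmarginal (fun _ => (volume : Measure ℝ)) S f

lemma step1 {n : ℕ} {F : Vn n → ℝ} (hF : ContDiff ℝ Sm F) (hc : HasCompactSupport F)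
    (S : Finset (Fin (2*n+1))) (i : Fin (2*n+1)) (hi : i ∉ S) :
    lm S (fun x => ‖F x‖ₑ) ≤ lm (insert i S)
      (fun x => ‖fderiv ℝ F x (Pi.single i 1 : Vn n)‖ₑ) := by
  have hm : Measurable (fun x : Vn n => ‖fderiv ℝ F x (Pi.single i 1 : Vn n)‖ₑ) := by
    have : Continuous (fun x : Vn n => fderiv ℝ F x (Pi.single i 1 : Vn n)) :=
      (hF.continuous_fderiv (by simp [Sm])).clm_apply continuous_const
    exact this.enorm.measurable
  unfold lm
  rw [lmarginal_insert' _ hm hi]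
  apply lmarginal_mono
  intro z
  have h := line_bound hF hc (v := (Pi.single i 1 : Vn n)) (by simp) z
  have e : ∀ s : ℝ, z + s • (Pi.single i 1 : Vn n) = Function.update z i (z i + s) := by
    intro s; funext k
    by_cases hk : k = i
    · subst hk; simp
    · simp [hk]
  simp only [e] at h
  rwa [lintegral_add_left_eq_self
    (fun τ => ‖fderiv ℝ F (Function.update z i τ) (Pi.single i 1 : Vn n)‖ₑ) (z i)] at h

def tI (n : ℕ) : Fin (2*n+1) := ⟨2*n, by omega⟩

lemma hDeriv_cont {n : ℕ} {F : Vn n → ℝ} (hF : ContDiff ℝ Sm F) (j : Fin (2*n)) :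
    Continuous (hDeriv n j F) := (XI_contDiff [j] hF).continuous

lemma step2 {n : ℕ} {F : Vn n → ℝ} (hF : ContDiff ℝ Sm F) (hc : HasCompactSupport F)
    (S : Finset (Fin (2*n+1))) (j : Fin (2*n)) (hj : (j:ℕ) < n) (hi : j.castSucc ∉ S)
    (ht : tI n ∈ S) :
    lm S (fun x => ‖F x‖ₑ) ≤ lm (insert j.castSucc S) (fun x => ‖hDeriv n j F x‖ₑ) := by
  have hm : Measurable (fun x : Vn n => ‖hDeriv n j F x‖ₑ) := (hDeriv_cont hF j).enorm.measurable
  have hm2 : Measurable (fun x : Vn n => ‖F x‖ₑ) := hF.continuous.enorm.measurable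
  have hne : j.castSucc ≠ tI n := by
    intro h; rw [h] at hi; exact hi ht
  have hjt : (j:ℕ) ≠ 2*n := by omega
  have hmG : Measurable (fun x : Vn n => ∫⁻ τ : ℝ, ‖hDeriv n j F (Function.update x (tI n) τ)‖ₑ) := by
    have := hm.lmarginal (μ := fun _ : Fin (2*n+1) => (volume : Measure ℝ)) (s := {tI n})
    rwa [lmarginal_singleton] at this
  unfold lm
  rw [lmarginal_erase' _ hm2 ht, lmarginal_erase' _ hm (Finset.mem_insert_of_mem ht),
    Finset.erase_insert_of_ne hne, lmarginal_insert' _ hmG (by simp [hi])]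
  apply lmarginal_mono
  intro z
  set y : ℝ := z ⟨n + j, by omega⟩ with hy
  have hXv : ∀ w : Vn n, w ⟨n + j, by omega⟩ = y →
      Xvec n j w = Pi.single j.castSucc 1 + y • Pi.single (tI n) 1 := by
    intro w hw
    simp only [Xvec, hj, dif_pos, hw]
    rfl
  set v : Vn n := Pi.single j.castSucc 1 + y • Pi.single (tI n) 1 with hv
  have hv0 : v ≠ 0 := by
    intro h
    have := congrFun h j.castSucc
    simp [hv, hne] at this
  have e : ∀ τ s : ℝ, Function.update z (tI n) τ + s • v =
      Function.update (Function.update z j.castSucc (z j.castSucc + s)) (tI n) (τ + s * y) := by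
    intro τ s; funext k
    by_cases hk : k = tI n
    · subst hk; simp [hv, hne.symm]
    · by_cases hk2 : k = j.castSucc
      · subst hk2; simp [hv, hne]
      · simp [hv, hk, hk2]
  have e2 : ∀ τ s : ℝ, Xvec n j (Function.update (Function.update z j.castSucc s) (tI n) τ) = v := by
    intro τ s
    apply hXv
    rw [Function.update_of_ne, Function.update_of_ne]
    · intro h; have := congrArg Fin.val h; simp at this; omega
    · intro h; have := congrArg Fin.val h; simp [tI] at this; omega
  have e3 : ∀ τ s : ℝ, fderiv ℝ F (Function.update (Function.update z j.castSucc s) (tI n) τ) v =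
      hDeriv n j F (Function.update (Function.update z j.castSucc s) (tI n) τ) := by
    intro τ s; simp only [hDeriv, e2]
  have hjc := hDeriv_cont hF j
  calc ∫⁻ τ : ℝ, ‖F (Function.update z (tI n) τ)‖ₑ
      ≤ ∫⁻ τ : ℝ, ∫⁻ s : ℝ, ‖hDeriv n j F (Function.update (Function.update z j.castSucc
          (z j.castSucc + s)) (tI n) (τ + s * y))‖ₑ := by
        apply lintegral_mono
        intro τ
        have := line_bound hF hc hv0 (Function.update z (tI n) τ)
        simp only [e, e3] at this
        exact this
    _ = ∫⁻ s : ℝ, ∫⁻ τ : ℝ, ‖hDeriv n j F (Function.update (Function.update z j.castSucc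
          (z j.castSucc + s)) (tI n) (τ + s * y))‖ₑ := by
        apply lintegral_lintegral_swap
        apply Continuous.aemeasurable
        apply Continuous.enorm
        apply hjc.comp
        fun_prop
    _ = ∫⁻ s : ℝ, ∫⁻ τ : ℝ, ‖hDeriv n j F (Function.update (Function.update z j.castSucc
          (z j.castSucc + s)) (tI n) τ)‖ₑ := by
        congr 1; funext s
        exact lintegral_add_right_eq_self (fun τ => ‖hDeriv n j F (Function.update
          (Function.update z j.castSucc (z j.castSucc + s)) (tI n) τ)‖ₑ) (s * y)
    _ = ∫⁻ s : ℝ, ∫⁻ τ : ℝ, ‖hDeriv n j F (Function.update (Function.update z j.castSucc s)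
          (tI n) τ)‖ₑ :=
        lintegral_add_left_eq_self (fun s => ∫⁻ τ : ℝ, ‖hDeriv n j F (Function.update
          (Function.update z j.castSucc s) (tI n) τ)‖ₑ) (z j.castSucc)

lemma steps_y {n : ℕ} {F : Vn n → ℝ} (hF : ContDiff ℝ Sm F) (hc : HasCompactSupport F)
    (l : List (Fin (2*n))) (hl : l.Nodup) (hln : ∀ j ∈ l, n ≤ (j:ℕ)) :
    (fun x => ‖F x‖ₑ) ≤ lm (l.map Fin.castSucc).toFinset (fun x => ‖XI n l F x‖ₑ) := by
  induction l with
  | nil => simp [lm, XI]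
  | cons j l ih =>
    rw [List.nodup_cons] at hl
    refine (ih hl.2 (fun k hk => hln k (List.mem_cons_of_mem _ hk))).trans ?_
    have h := step1 (XI_contDiff l hF) (XI_hcs l hc) (l.map Fin.castSucc).toFinset j.castSucc
      (by simpa using hl.1)
    rw [List.map_cons, List.toFinset_cons]
    refine h.trans (le_of_eq ?_)
    congr 1
    funext x
    have hj : ¬ (j:ℕ) < n := not_lt.2 (hln j (by simp))
    simp only [XI, hDeriv, Xvec, hj, dif_neg, not_false_eq_true]
    rfl

lemma steps_x {n : ℕ} {F : Vn n → ℝ} (hF : ContDiff ℝ Sm F) (hc : HasCompactSupport F)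
    (S : Finset (Fin (2*n+1))) (ht : tI n ∈ S)
    (l : List (Fin (2*n))) (hl : l.Nodup) (hln : ∀ j ∈ l, (j:ℕ) < n)
    (hd : ∀ j ∈ l, j.castSucc ∉ S) :
    lm S (fun x => ‖F x‖ₑ) ≤ lm ((l.map Fin.castSucc).toFinset ∪ S) (fun x => ‖XI n l F x‖ₑ) := by
  induction l with
  | nil => simp [lm, XI]
  | cons j l ih =>
    rw [List.nodup_cons] at hl
    refine (ih hl.2 (fun k hk => hln k (List.mem_cons_of_mem _ hk))
      (fun k hk => hd k (List.mem_cons_of_mem _ hk))).trans ?_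
    have h := step2 (XI_contDiff l hF) (XI_hcs l hc) ((l.map Fin.castSucc).toFinset ∪ S) j
      (hln j (by simp)) (by simpa using ⟨hl.1, hd j (by simp)⟩) (by simp [ht])
    rw [List.map_cons, List.toFinset_cons, Finset.insert_union]
    exact h

lemma bracket {n : ℕ} (hn : 1 ≤ n) {h : Vn n → ℝ} (hh : ContDiff ℝ Sm h) (x : Vn n) :
    fderiv ℝ h x (Pi.single (tI n) 1 : Vn n) =
      XI n [⟨n, by omega⟩, ⟨0, by omega⟩] h x - XI n [⟨0, by omega⟩, ⟨n, by omega⟩] h x := by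
  have hd2 : DifferentiableAt ℝ (fderiv ℝ h) x :=
    ((hh.fderiv_right (m := 1) two_le_Sm).differentiable (by simp)) x
  have hX : ∀ (j : Fin (2*n)), DifferentiableAt ℝ (Xvec n j) x := fun j =>
    ((Xvec_contDiff n j (k := 1)).differentiable (by simp)) x
  have key : ∀ i j : Fin (2*n), XI n [i, j] h x =
      fderiv ℝ (fderiv ℝ h) x (Xvec n i x) (Xvec n j x) +
        fderiv ℝ h x (fderiv ℝ (Xvec n j) x (Xvec n i x)) := by
    intro i j
    simp only [XI]
    have : HasFDerivAt (hDeriv n j h) _ x := hd2.hasFDerivAt.clm_apply (hX j).hasFDerivAt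
    rw [hDeriv, this.fderiv]
    simp [add_comm]
  have hsymm : IsSymmSndFDerivAt ℝ h x := by
    apply ContDiffAt.isSymmSndFDerivAt (n := Sm) hh.contDiffAt
    simpa using two_le_Sm'
  rw [key, key, hsymm.eq]
  have h1 : fderiv ℝ (Xvec n ⟨n, by omega⟩) x = 0 := by
    have : Xvec n (⟨n, by omega⟩ : Fin (2*n)) = fun _ => (Pi.single ⟨n, by omega⟩ 1 : Vn n) := by
      funext y; simp [Xvec]
    rw [this]; simp
  have h2 : fderiv ℝ (Xvec n ⟨0, by omega⟩) x (Xvec n ⟨n, by omega⟩ x) = Pi.single (tI n) 1 := by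
    have e : Xvec n (⟨0, by omega⟩ : Fin (2*n)) = fun y => (Pi.single ⟨0, by omega⟩ 1 : Vn n) +
        y ⟨n, by omega⟩ • (Pi.single (tI n) 1 : Vn n) := by
      funext y
      have : 0 < n := hn
      simp only [Xvec, this, dif_pos]; rfl
    have hp : HasFDerivAt (fun y : Vn n => y ⟨n, by omega⟩)
        (ContinuousLinearMap.proj (R := ℝ) (φ := fun _ : Fin (2*n+1) => ℝ) ⟨n, by omega⟩) x :=
      (ContinuousLinearMap.proj (R := ℝ) (φ := fun _ : Fin (2*n+1) => ℝ) ⟨n, by omega⟩).hasFDerivAt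
    have := (hp.smul_const (Pi.single (tI n) 1 : Vn n)).const_add (Pi.single ⟨0, by omega⟩ 1 : Vn n)
    rw [e, this.fderiv]
    simp [Xvec]
  rw [h1, h2]
  simp

lemma sup_bound {n : ℕ} (hn : 1 ≤ n) : ∃ L1 L2 : List (Fin (2*n)), L1.length = 2*n+2 ∧
    L2.length = 2*n+2 ∧ ∀ g : Vn n → ℝ, ContDiff ℝ Sm g → HasCompactSupport g → ∀ z,
      |g z| ≤ ∫ x, (|XI n L1 g x| + |XI n L2 g x|) := by
  set xs : List (Fin (2*n)) := (List.finRange (2*n)).filter (fun j : Fin (2*n) => decide ((j:ℕ) < n)) with hxs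
  set ys : List (Fin (2*n)) := (List.finRange (2*n)).filter (fun j : Fin (2*n) => !decide ((j:ℕ) < n)) with hys
  have hlen : xs.length + ys.length = 2*n := by
    have := List.length_eq_length_filter_add (l := List.finRange (2*n))
      (fun j : Fin (2*n) => decide ((j:ℕ) < n))
    rw [List.length_finRange] at this
    exact this.symm
  set A : List (Fin (2*n)) := [⟨n, by omega⟩, ⟨0, by omega⟩] with hA
  set B : List (Fin (2*n)) := [⟨0, by omega⟩, ⟨n, by omega⟩] with hB
  refine ⟨xs ++ (A ++ ys), xs ++ (B ++ ys), by simp [hA]; omega, by simp [hB]; omega, ?_⟩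
  intro g hg hc z
  set h := XI n ys g with hh
  have hhs : ContDiff ℝ Sm h := XI_contDiff ys hg
  have hhc : HasCompactSupport h := XI_hcs ys hc
  have hT : ∀ x, fderiv ℝ h x (Pi.single (tI n) 1 : Vn n) =
      XI n A h x - XI n B h x := fun x => bracket hn hhs x
  have hTs : ContDiff ℝ Sm (fun x => XI n A h x - XI n B h x) :=
    (XI_contDiff A hhs).sub (XI_contDiff B hhs)
  have hTc : HasCompactSupport (fun x => XI n A h x - XI n B h x) := by
    exact HasCompactSupport.sub (XI_hcs A hhc) (XI_hcs B hhc)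
  have h1 := steps_y hg hc ys ((List.nodup_finRange _).filter _)
    (by intro j hj; simpa [hys] using hj)
  have h2 := step1 hhs hhc (ys.map Fin.castSucc).toFinset (tI n) (by
    simp only [List.mem_toFinset, List.mem_map, not_exists, not_and]
    intro j _ he
    have := congrArg Fin.val he
    simp [tI] at this; omega)
  simp only [hT] at h2
  have h3 := steps_x hTs hTc (insert (tI n) (ys.map Fin.castSucc).toFinset) (by simp) xs
    ((List.nodup_finRange _).filter _) (by intro j hj; simpa [hxs] using hj) (by
      intro j hj he
      have hjn : (j:ℕ) < n := by simpa [hxs] using hj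
      simp only [Finset.mem_insert, List.mem_toFinset, List.mem_map] at he
      rcases he with he | ⟨k, hk, he⟩
      · have := congrArg Fin.val he
        simp [tI] at this; omega
      · have hkn : n ≤ (k:ℕ) := by simpa [hys] using hk
        have := congrArg Fin.val he
        simp at this; omega)
  have huniv : ((xs.map Fin.castSucc).toFinset ∪ insert (tI n) (ys.map Fin.castSucc).toFinset)
      = Finset.univ := by
    ext i
    simp only [Finset.mem_union, Finset.mem_insert, List.mem_toFinset, List.mem_map,
      Finset.mem_univ, iff_true]
    by_cases hi : (i:ℕ) < 2*n
    · by_cases hi2 : (i:ℕ) < n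
      · left; exact ⟨⟨i, hi⟩, by simp [hxs, hi2], rfl⟩
      · right; right; exact ⟨⟨i, hi⟩, by simp [hys]; omega, rfl⟩
    · right; left; ext; simp [tI]; omega
  rw [huniv] at h3
  simp only [lm, lmarginal_univ] at h3
  have h4 := ((h1.trans h2).trans h3) z
  simp only [] at h4
  have e1 : XI n xs (fun x => XI n A h x - XI n B h x) =
      fun x => XI n (xs ++ (A ++ ys)) g x - XI n (xs ++ (B ++ ys)) g x := by
    rw [XI_sub xs (XI_contDiff A hhs) (XI_contDiff B hhs)]
    simp only [XI_append, hh]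
  rw [e1] at h4
  have hi : ∀ L, Integrable (fun x => XI n L g x) := fun L =>
    (XI_contDiff L hg).continuous.integrable_of_hasCompactSupport (XI_hcs L hc)
  have h5 : ‖g z‖ₑ ≤ ENNReal.ofReal
      (∫ x, (|XI n (xs ++ (A ++ ys)) g x| + |XI n (xs ++ (B ++ ys)) g x|)) := by
    have hi2 : Integrable
        (fun x => |XI n (xs ++ (A ++ ys)) g x| + |XI n (xs ++ (B ++ ys)) g x|) :=
      (hi _).abs.add (hi _).abs
    rw [ofReal_integral_eq_lintegral_ofReal hi2
      (Eventually.of_forall fun x => add_nonneg (abs_nonneg _) (abs_nonneg _))]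
    refine h4.trans (lintegral_mono fun x => ?_)
    rw [Real.enorm_eq_ofReal_abs]
    exact ENNReal.ofReal_le_ofReal (abs_sub _ _)
  rw [Real.enorm_eq_ofReal_abs] at h5
  exact (ENNReal.ofReal_le_ofReal_iff (integral_nonneg fun x => by positivity)).1 h5

end FS

namespace FS
open Set Filter Topology

lemma phi_deriv {q : ℝ} (hq : 0 < q) (t : ℝ) :
    HasDerivAt (fun t : ℝ => |t| ^ q * t) ((q + 1) * |t| ^ q) t := by
  rcases eq_or_ne t 0 with rfl | ht
  · rw [hasDerivAt_iff_tendsto_slope]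
    have h1 : Tendsto (fun t : ℝ => |t| ^ q) (𝓝[≠] 0) (𝓝 ((q+1) * |(0:ℝ)| ^ q)) := by
      have hc : Continuous (fun t : ℝ => |t| ^ q) :=
        continuous_abs.rpow_const (fun _ => Or.inr hq.le)
      have := (hc.tendsto 0).mono_left (nhdsWithin_le_nhds (s := {0}ᶜ))
      simpa [Real.zero_rpow hq.ne'] using this
    refine h1.congr' ?_
    filter_upwards [self_mem_nhdsWithin] with t ht
    have ht : t ≠ 0 := ht
    simp [slope_def_field]
    field_simp
  · have h1 := ((hasDerivAt_abs ht).rpow_const (p := q) (Or.inl (abs_ne_zero.2 ht))).mul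
      (hasDerivAt_id t)
    convert! h1 using 1
    have h2 : |t| ^ q = |t| ^ (q-1) * |t| := by
      rw [← Real.rpow_add_one (abs_ne_zero.2 ht)]; ring_nf
    have h3 : (SignType.sign t : ℝ) * t = |t| := sign_mul_self t
    simp only [id]
    rw [h2, ← h3]; ring

lemma int_cs {n : ℕ} {F : Vn n → ℝ} (hF : Continuous F) (hc : HasCompactSupport F) :
    Integrable F := hF.integrable_of_hasCompactSupport hc

lemma dir_zero {n : ℕ} {F c : Vn n → ℝ} (hF : ContDiff ℝ 1 F) (hc : HasCompactSupport F)
    (hcc : ContDiff ℝ 1 c) (v : Vn n) (hv : ∀ x, fderiv ℝ c x v = 0) :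
    ∫ x, c x * fderiv ℝ F x v = 0 := by
  have hFc : Continuous (fun x => fderiv ℝ F x v) :=
    (hF.continuous_fderiv (by simp)).clm_apply continuous_const
  have hFs : HasCompactSupport (fun x => fderiv ℝ F x v) := hc.fderiv_apply ℝ v
  rw [integral_mul_fderiv_eq_neg_fderiv_mul_of_integrable]
  · simp [hv]
  · simp [hv]
  · exact int_cs (hcc.continuous.mul hFc) hFs.mul_left
  · exact int_cs (hcc.continuous.mul hF.continuous) hc.mul_left
  · intro x _; exact (hcc.differentiable (by simp)) x
  · intro x _; exact (hF.differentiable (by simp)) x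

lemma hDeriv_int_zero {n : ℕ} (j : Fin (2*n)) {F : Vn n → ℝ} (hF : ContDiff ℝ 1 F)
    (hc : HasCompactSupport F) : ∫ x, hDeriv n j F x = 0 := by
  have hFc : ∀ v, Continuous (fun x => fderiv ℝ F x v) := fun v =>
    (hF.continuous_fderiv (by simp)).clm_apply continuous_const
  have hFs : ∀ v, HasCompactSupport (fun x => fderiv ℝ F x v) := fun v => hc.fderiv_apply ℝ v
  have h1 : ∀ v : Vn n, ∫ x, fderiv ℝ F x v = 0 := fun v => by
    simpa using dir_zero hF hc (c := fun _ => 1) contDiff_const v (by simp)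
  by_cases hj : (j:ℕ) < n
  · have e : ∀ x, hDeriv n j F x = fderiv ℝ F x (Pi.single ⟨j, by omega⟩ 1 : Vn n) +
        x ⟨n + j, by omega⟩ * fderiv ℝ F x (Pi.single (tI n) 1 : Vn n) := by
      intro x
      simp only [hDeriv, Xvec, hj, dif_pos, map_add, map_smul, smul_eq_mul]
      rfl
    simp only [e]
    have hcoord : ContDiff ℝ 1 (fun x : Vn n => x ⟨n + j, by omega⟩) := by fun_prop
    have hi2 : Integrable (fun x : Vn n => x ⟨n + j, by omega⟩ *
        fderiv ℝ F x (Pi.single (tI n) 1 : Vn n)) :=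
      int_cs (hcoord.continuous.mul (hFc _)) (hFs _).mul_left
    have hi1 : Integrable (fun x : Vn n => fderiv ℝ F x (Pi.single ⟨j, by omega⟩ 1 : Vn n)) :=
      int_cs (hFc _) (hFs _)
    rw [integral_add hi1 hi2, h1,
      dir_zero hF hc hcoord, add_zero]
    intro x
    have hp : HasFDerivAt (fun y : Vn n => y ⟨n + j, by omega⟩)
        (ContinuousLinearMap.proj (R := ℝ) (φ := fun _ : Fin (2*n+1) => ℝ) ⟨n + j, by omega⟩) x :=
      (ContinuousLinearMap.proj (R := ℝ) (φ := fun _ : Fin (2*n+1) => ℝ)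
        ⟨n + j, by omega⟩).hasFDerivAt
    rw [hp.fderiv]
    simp only [ContinuousLinearMap.proj_apply]
    rw [Pi.single_eq_of_ne]
    intro h
    have := congrArg Fin.val h
    simp [tI] at this; omega
  · have e : ∀ x, hDeriv n j F x = fderiv ℝ F x (Pi.single ⟨j, by omega⟩ 1 : Vn n) := by
      intro x
      simp only [hDeriv, Xvec, hj, dif_neg, not_false_eq_true]
    simp only [e, h1]

lemma abs_rpow_cont {n : ℕ} {F : Vn n → ℝ} (hF : Continuous F) {r : ℝ} (hr : 0 < r) :
    Continuous (fun x => |F x| ^ r) := hF.abs.rpow_const (fun _ => Or.inr hr.le)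

lemma abs_rpow_int {n : ℕ} {F : Vn n → ℝ} (hF : Continuous F) (hc : HasCompactSupport F)
    {r : ℝ} (hr : 0 < r) : Integrable (fun x => |F x| ^ r) := by
  refine int_cs (abs_rpow_cont hF hr) ?_
  exact hc.comp_left (g := fun t => |t| ^ r) (by simp [Real.zero_rpow hr.ne'])

lemma ibp {n : ℕ} (j : Fin (2*n)) {h : Vn n → ℝ} (hh : ContDiff ℝ Sm h)
    (hc : HasCompactSupport h) {p : ℝ} (hp : 2 < p) :
    ∫ x, |hDeriv n j h x| ^ p ≤
      (p - 1) * ∫ x, |h x| * |hDeriv n j h x| ^ (p-2) * |hDeriv n j (hDeriv n j h) x| := by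
  set h1 := hDeriv n j h with hh1
  have hs1 : ContDiff ℝ Sm h1 := XI_contDiff [j] hh
  have hc1 : HasCompactSupport h1 := XI_hcs [j] hc
  set h2 := hDeriv n j h1 with hh2
  have hs2 : ContDiff ℝ Sm h2 := XI_contDiff [j] hs1
  have hq : 0 < p - 2 := by linarith
  have hphi : ContDiff ℝ 1 (fun t : ℝ => |t| ^ (p-2) * t) := by
    rw [contDiff_one_iff_deriv]
    refine ⟨fun t => (phi_deriv hq t).differentiableAt, ?_⟩
    have : deriv (fun t : ℝ => |t| ^ (p-2) * t) = fun t => ((p-2) + 1) * |t| ^ (p-2) :=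
      funext fun t => (phi_deriv hq t).deriv
    rw [this]
    exact continuous_const.mul (continuous_abs.rpow_const (fun _ => Or.inr hq.le))
  have hone : (1 : WithTop ℕ∞) ≤ Sm := by simp [Sm]
  have hG : ContDiff ℝ 1 (fun x => |h1 x| ^ (p-2) * h1 x) := hphi.comp (hs1.of_le hone)
  have hF : ContDiff ℝ 1 (fun x => h x * (|h1 x| ^ (p-2) * h1 x)) := (hh.of_le hone).mul hG
  have hFc : HasCompactSupport (fun x => h x * (|h1 x| ^ (p-2) * h1 x)) := hc.mul_right
  have h0 := hDeriv_int_zero j hF hFc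
  have e : ∀ x, hDeriv n j (fun x => h x * (|h1 x| ^ (p-2) * h1 x)) x =
      |h1 x| ^ p + (p-1) * (h x * |h1 x| ^ (p-2) * h2 x) := by
    intro x
    rw [hDeriv_mul j ((hh.differentiable (by simp [Sm])) x) ((hG.differentiable (by simp)) x)]
    have hd : hDeriv n j (fun x => |h1 x| ^ (p-2) * h1 x) x = ((p-2)+1) * |h1 x| ^ (p-2) * h2 x := by
      have := (phi_deriv hq (h1 x)).comp_hasFDerivAt x
        ((hs1.differentiable (by simp [Sm])) x).hasFDerivAt
      have h' : HasFDerivAt (fun x => |h1 x| ^ (p-2) * h1 x) _ x := this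
      rw [hDeriv, h'.fderiv]
      simp [hh2, hDeriv]
    rw [hd, ← hh1]
    have e2 : |h1 x| ^ p = |h1 x| ^ (p-2) * (h1 x * h1 x) := by
      have : |h1 x| ^ p = |h1 x| ^ ((p-2) + 2) := by ring_nf
      rw [this, Real.rpow_add' (abs_nonneg _) (by linarith)]
      congr 1
      rw [Real.rpow_two, sq_abs, sq]
    rw [e2]; ring
  have hcp : Continuous (fun x => |h1 x| ^ (p-2)) := abs_rpow_cont hs1.continuous hq
  have hi1 : Integrable (fun x => |h1 x| ^ p) := abs_rpow_int hs1.continuous hc1 (by linarith)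
  have hi2 : Integrable (fun x => h x * |h1 x| ^ (p-2) * h2 x) :=
    int_cs ((hh.continuous.mul hcp).mul hs2.continuous) (hc.mul_right.mul_right)
  simp only [e] at h0
  rw [integral_add hi1 (hi2.const_mul _), integral_const_mul] at h0
  have h3 : -(∫ x, h x * |h1 x| ^ (p-2) * h2 x) ≤ ∫ x, |h x| * |h1 x| ^ (p-2) * |h2 x| := by
    refine (neg_le_abs _).trans ((abs_integral_le_integral_abs).trans (le_of_eq ?_))
    congr 1; funext x
    rw [abs_mul, abs_mul, abs_of_nonneg (a := |h1 x| ^ (p-2)) (by positivity)]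
  have hp1 : 0 ≤ p - 1 := by linarith
  have := mul_le_mul_of_nonneg_left h3 hp1
  linarith

lemma young3 {w1 w2 w3 : ℝ} (h1 : 0 ≤ w1) (h2 : 0 ≤ w2) (h3 : 0 < w3) (hw : w1 + w2 + w3 = 1)
    {ε : ℝ} (hε : 0 < ε) : ∃ K : ℝ, 0 ≤ K ∧ ∀ A B C : ℝ, 0 ≤ A → 0 ≤ B → 0 ≤ C →
      A ^ w1 * B ^ w2 * C ^ w3 ≤ ε * A + ε * B + K * C := by
  set K := (ε ^ (-(w1 + w2))) ^ (1 / w3) with hK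
  have hK0 : 0 < K := by positivity
  refine ⟨K, hK0.le, fun A B C hA hB hC => ?_⟩
  have hy := Real.geom_mean_le_arith_mean3_weighted h1 h2 h3.le
    (mul_nonneg hε.le hA) (mul_nonneg hε.le hB) (mul_nonneg hK0.le hC) hw
  have e : (ε * A) ^ w1 * (ε * B) ^ w2 * (K * C) ^ w3 = A ^ w1 * B ^ w2 * C ^ w3 := by
    rw [Real.mul_rpow hε.le hA, Real.mul_rpow hε.le hB, Real.mul_rpow hK0.le hC]
    have : K ^ w3 = ε ^ (-(w1 + w2)) := by
      rw [hK, ← Real.rpow_mul (by positivity), one_div_mul_cancel h3.ne', Real.rpow_one]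
    have h4 : ε ^ w1 * ε ^ w2 * K ^ w3 = 1 := by
      rw [this, ← Real.rpow_add hε, ← Real.rpow_add hε]; simp
    calc _ = (ε ^ w1 * ε ^ w2 * K ^ w3) * (A ^ w1 * B ^ w2 * C ^ w3) := by ring
      _ = _ := by rw [h4, one_mul]
  rw [e] at hy
  have a1 : w1 * (ε * A) ≤ 1 * (ε * A) :=
    mul_le_mul_of_nonneg_right (by linarith) (by positivity)
  have a2 : w2 * (ε * B) ≤ 1 * (ε * B) :=
    mul_le_mul_of_nonneg_right (by linarith) (by positivity)
  have a3 : w3 * (K * C) ≤ 1 * (K * C) :=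
    mul_le_mul_of_nonneg_right (by linarith) (by positivity)
  linarith

/-- exponent `2m/k` -/
def ex (m k : ℕ) : ℝ := 2 * m / k

lemma ex_pos {m k : ℕ} (hm : 0 < m) (hk : 0 < k) : 0 < ex m k := by
  unfold ex; positivity

lemma rpow_ex_cancel {m k : ℕ} (hm : 0 < m) (hk : 0 < k) {a w : ℝ} (ha : 0 ≤ a) :
    (a ^ ex m k) ^ (w * k / (2*m)) = a ^ w := by
  rw [← Real.rpow_mul ha]
  congr 1
  unfold ex
  have : (m:ℝ) ≠ 0 := by positivity
  have : (k:ℝ) ≠ 0 := by positivity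
  field_simp

lemma pw (m k : ℕ) (hk : k + 1 < m) {ε : ℝ} (hε : 0 < ε) : ∃ K : ℝ, 0 ≤ K ∧
    ∀ a b c : ℝ, 0 ≤ a → 0 ≤ b → 0 ≤ c → (k = 0 → b ≤ 1) →
      b * a ^ (ex m (k+1) - 2) * c ≤ ε * a ^ ex m (k+1) +
        ε * (if k = 0 then 0 else b ^ ex m k) + K * c ^ ex m (k+2) := by
  have hm : 0 < m := by omega
  have hmR : (0:ℝ) < m := by exact_mod_cast hm
  have hkm : (k:ℝ) + 1 < m := by exact_mod_cast hk
  have h1 : (0:ℝ) ≤ 1 - (k+1)/m := by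
    rw [sub_nonneg, div_le_one hmR]; exact hkm.le
  obtain ⟨K, hK, h⟩ := young3 (w1 := 1 - (k+1)/m) (w2 := k/(2*m)) (w3 := (k+2)/(2*m)) h1
    (by positivity) (by positivity) (by field_simp; ring) hε
  refine ⟨K, hK, fun a b c ha hb hc hb1 => ?_⟩
  have ea : (a ^ ex m (k+1)) ^ (1 - ((k:ℝ)+1)/m) = a ^ (ex m (k+1) - 2) := by
    have := rpow_ex_cancel (w := ex m (k+1) - 2) hm (Nat.succ_pos k) ha
    rw [← this]
    congr 1
    unfold ex
    push_cast
    field_simp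
  have ec : (c ^ ex m (k+2)) ^ (((k:ℝ)+2)/(2*m)) = c := by
    have := rpow_ex_cancel (w := 1) hm (Nat.succ_pos (k+1)) hc
    rw [Real.rpow_one] at this
    push_cast at this
    rw [← this]
    congr 2 <;> ring_nf
  have hh := h (a ^ ex m (k+1)) (if k = 0 then 0 else b ^ ex m k) (c ^ ex m (k+2))
    (by positivity) (by split_ifs <;> positivity) (by positivity)
  rw [ea, ec] at hh
  refine le_trans ?_ hh
  rw [mul_comm b]
  refine mul_le_mul_of_nonneg_right (mul_le_mul_of_nonneg_left ?_ (by positivity)) hc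
  by_cases h0 : k = 0
  · subst h0; simpa using hb1 rfl
  · simp only [h0, if_false]
    have := rpow_ex_cancel (w := 1) hm (Nat.pos_of_ne_zero h0) hb
    rw [Real.rpow_one, one_mul] at this
    rw [this]

def Jk (n m k : ℕ) (g : Vn n → ℝ) : ℝ :=
  ∑ I : Fin k → Fin (2*n), ∫ x, |XI n (List.ofFn I) g x| ^ ex m k

lemma Jk_nonneg (n m k : ℕ) (g : Vn n → ℝ) : 0 ≤ Jk n m k g :=
  Finset.sum_nonneg fun _ _ => integral_nonneg fun _ => by positivity

lemma le_Jk (n m k : ℕ) (g : Vn n → ℝ) (I : Fin k → Fin (2*n)) :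
    ∫ x, |XI n (List.ofFn I) g x| ^ ex m k ≤ Jk n m k g :=
  Finset.single_le_sum (f := fun I : Fin k → Fin (2*n) =>
    ∫ x, |XI n (List.ofFn I) g x| ^ ex m k)
    (fun _ _ => integral_nonneg fun _ => by positivity) (Finset.mem_univ I)

lemma gn_one {n : ℕ} (m k : ℕ) (hk : k + 1 < m) {ε : ℝ} (hε : 0 < ε) : ∃ K : ℝ, 0 ≤ K ∧
    ∀ g : Vn n → ℝ, ContDiff ℝ Sm g → HasCompactSupport g → (∀ x, |g x| ≤ 1) →
      ∀ I : Fin (k+1) → Fin (2*n), ∫ x, |XI n (List.ofFn I) g x| ^ ex m (k+1) ≤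
        (ex m (k+1) - 1) * (ε * Jk n m (k+1) g + ε * (if k = 0 then 0 else Jk n m k g) +
          K * Jk n m (k+2) g) := by
  obtain ⟨K, hK, h⟩ := pw m k hk hε
  refine ⟨K, hK, fun g hg hc hg1 I => ?_⟩
  have hm : 0 < m := by omega
  have hp : 2 < ex m (k+1) := by
    unfold ex
    rw [lt_div_iff₀ (by positivity)]
    have : ((k+1 : ℕ):ℝ) < m := by exact_mod_cast hk
    linarith
  set L := List.ofFn (fun i : Fin k => I i.succ) with hL
  set j := I 0 with hj
  have eI : List.ofFn I = j :: L := by rw [List.ofFn_succ]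
  have eI2 : List.ofFn (Fin.cons j I : Fin (k+2) → Fin (2*n)) = j :: j :: L := by
    rw [List.ofFn_succ]; simp [hj, hL]
  have hs : ∀ L, ContDiff ℝ Sm (XI n L g) := fun L => XI_contDiff L hg
  have hcs : ∀ L, HasCompactSupport (XI n L g) := fun L => XI_hcs L hc
  have h1 := ibp j (hs L) (hcs L) hp
  refine (le_of_eq (by rw [eI]; rfl)).trans (h1.trans ?_)
  refine mul_le_mul_of_nonneg_left ?_ (by linarith)
  have hiA : Integrable (fun x => |XI n (j :: L) g x| ^ ex m (k+1)) :=
    abs_rpow_int (hs _).continuous (hcs _) (by linarith)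
  have hiB : Integrable (fun x => if k = 0 then (0:ℝ) else |XI n L g x| ^ ex m k) := by
    by_cases h0 : k = 0
    · simp [h0]
    · simp only [h0, if_false]
      exact abs_rpow_int (hs _).continuous (hcs _) (ex_pos hm (Nat.pos_of_ne_zero h0))
  have hiC : Integrable (fun x => |XI n (j :: j :: L) g x| ^ ex m (k+2)) :=
    abs_rpow_int (hs _).continuous (hcs _) (ex_pos hm (by omega))
  have hb : ∀ x, k = 0 → |XI n L g x| ≤ 1 := by
    intro x h0
    subst h0
    simpa [hL, XI] using hg1 x
  have hle : ∫ x, |XI n L g x| * |hDeriv n j (XI n L g) x| ^ (ex m (k+1) - 2) *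
      |hDeriv n j (hDeriv n j (XI n L g)) x| ≤ ∫ x, (ε * |XI n (j :: L) g x| ^ ex m (k+1) +
        ε * (if k = 0 then (0:ℝ) else |XI n L g x| ^ ex m k) +
        K * |XI n (j :: j :: L) g x| ^ ex m (k+2)) := by
    refine integral_mono_of_nonneg (Eventually.of_forall fun x => by positivity)
      (((hiA.const_mul _).add (hiB.const_mul _)).add (hiC.const_mul _))
      (Eventually.of_forall fun x => ?_)
    exact h _ _ _ (abs_nonneg _) (abs_nonneg _) (abs_nonneg _) (hb x)
  refine hle.trans ?_
  have hAB : Integrable (fun x => ε * |XI n (j :: L) g x| ^ ex m (k+1) +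
        ε * (if k = 0 then (0:ℝ) else |XI n L g x| ^ ex m k)) :=
    (hiA.const_mul ε).add (hiB.const_mul ε)
  rw [integral_add hAB (hiC.const_mul K),
    integral_add (hiA.const_mul ε) (hiB.const_mul ε), integral_const_mul, integral_const_mul,
    integral_const_mul]
  have a1 := le_Jk n m (k+1) g I
  rw [eI] at a1
  have a3 := le_Jk n m (k+2) g (Fin.cons j I)
  rw [eI2] at a3
  have a2 : ∫ x, (if k = 0 then (0:ℝ) else |XI n L g x| ^ ex m k) ≤
      (if k = 0 then 0 else Jk n m k g) := by
    by_cases h0 : k = 0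
    · simp [h0]
    · simp only [h0, if_false]
      exact le_Jk n m k g _
  gcongr

lemma gn_step {n : ℕ} (m k : ℕ) (hk : k + 1 < m) {Cp : ℝ} (hCp : 0 ≤ Cp)
    (hprev : ∀ g : Vn n → ℝ, ContDiff ℝ Sm g → HasCompactSupport g → (∀ x, |g x| ≤ 1) →
      (if k = 0 then 0 else Jk n m k g) ≤ Cp * Jk n m (k+1) g) : ∃ C : ℝ, 0 ≤ C ∧
    ∀ g : Vn n → ℝ, ContDiff ℝ Sm g → HasCompactSupport g → (∀ x, |g x| ≤ 1) →
      Jk n m (k+1) g ≤ C * Jk n m (k+2) g := by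
  have hp : 2 < ex m (k+1) := by
    unfold ex
    rw [lt_div_iff₀ (by positivity)]
    have : ((k+1 : ℕ):ℝ) < m := by exact_mod_cast hk
    linarith
  set N : ℝ := (Fintype.card (Fin (k+1) → Fin (2*n)) : ℝ) with hN
  have hN0 : 0 ≤ N := by positivity
  set Q : ℝ := N * (ex m (k+1) - 1) with hQ
  have hQ0 : 0 ≤ Q := mul_nonneg hN0 (by linarith)
  set ε : ℝ := 1 / (2 * (Q * (1 + Cp) + 1)) with hε
  have hden : 0 < Q * (1 + Cp) + 1 := by positivity
  have hε0 : 0 < ε := by positivity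
  obtain ⟨K, hK, h⟩ := gn_one (n := n) m k hk hε0
  refine ⟨2 * (Q * K), by positivity, fun g hg hc hg1 => ?_⟩
  have h1 : Jk n m (k+1) g ≤ N * ((ex m (k+1) - 1) * (ε * Jk n m (k+1) g +
      ε * (if k = 0 then 0 else Jk n m k g) + K * Jk n m (k+2) g)) := by
    have := Finset.sum_le_card_nsmul (Finset.univ : Finset (Fin (k+1) → Fin (2*n))) _ _
      (fun I _ => h g hg hc hg1 I)
    rw [nsmul_eq_mul, Finset.card_univ] at this
    exact this
  have h2 := hprev g hg hc hg1
  have hJ := Jk_nonneg n m (k+1) g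
  have h3 : Jk n m (k+1) g ≤ Q * (ε * Jk n m (k+1) g +
      ε * (Cp * Jk n m (k+1) g) + K * Jk n m (k+2) g) := by
    rw [hQ, mul_assoc]
    refine h1.trans ?_
    have : 0 ≤ ex m (k+1) - 1 := by linarith
    gcongr
  have h4 : Q * (1 + Cp) * ε ≤ 1/2 := by
    rw [hε, mul_one_div, div_le_div_iff₀ (by positivity) (by norm_num)]
    linarith
  have h5 := mul_le_mul_of_nonneg_right h4 hJ
  nlinarith

lemma gn_succ {n : ℕ} (m k : ℕ) (hk : k + 1 < m) : ∃ C : ℝ, 0 ≤ C ∧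
    ∀ g : Vn n → ℝ, ContDiff ℝ Sm g → HasCompactSupport g → (∀ x, |g x| ≤ 1) →
      Jk n m (k+1) g ≤ C * Jk n m (k+2) g := by
  induction k with
  | zero => exact gn_step m 0 hk le_rfl (by intros; simp)
  | succ k ih =>
    obtain ⟨C, hC, h⟩ := ih (by omega)
    exact gn_step m (k+1) hk hC (by intro g a b c; simpa using h g a b c)

lemma gn {n : ℕ} (m d : ℕ) : ∀ k, k + 1 + d = m → ∃ C : ℝ, 0 ≤ C ∧
    ∀ g : Vn n → ℝ, ContDiff ℝ Sm g → HasCompactSupport g → (∀ x, |g x| ≤ 1) →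
      Jk n m (k+1) g ≤ C * Jk n m m g := by
  induction d with
  | zero =>
    intro k hk
    have : k + 1 = m := hk
    subst this
    exact ⟨1, zero_le_one, by intros; simp⟩
  | succ d ih =>
    intro k hk
    obtain ⟨C, hC, h⟩ := ih (k+1) (by omega)
    obtain ⟨C', hC', h'⟩ := gn_succ (n := n) m k (by omega)
    refine ⟨C' * C, mul_nonneg hC' hC, fun g a b c => ?_⟩
    rw [mul_assoc]
    exact (h' g a b c).trans (mul_le_mul_of_nonneg_left (h g a b c) hC')

end FS

namespace FS
open Set Filter Topology

lemma list_abs_sum_le {α : Type*} (L : List α) (F : α → ℝ) (B : ℝ)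
    (h : ∀ p ∈ L, |F p| ≤ B) : |(L.map F).sum| ≤ L.length * B := by
  induction L with
  | nil => simp
  | cons a L ih =>
    simp only [List.map_cons, List.sum_cons, List.length_cons]
    have h1 := h a (by simp)
    have h2 := ih (fun p hp => h p (by simp [hp]))
    push_cast
    calc _ ≤ |F a| + |(L.map F).sum| := abs_add_le _ _
      _ ≤ _ := by linarith

lemma inv_rec (n : ℕ) {C₀ : ℝ} (hC₀ : 0 < C₀) (l : ℕ) : ∃ C : ℝ, 0 ≤ C ∧
    ∀ (f : Vn n → ℝ) (U : Set (Vn n)), IsOpen U → ContDiffOn ℝ Sm f U →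
      (∀ x ∈ U, 1/C₀ ≤ f x) → ∀ x ∈ U, ∀ P ρ : ℝ, 1 ≤ P → 0 ≤ ρ →
      (∀ B : List (Fin (2*n)), 1 ≤ B.length → B.length ≤ l →
        |XI n B f x| ≤ P * ρ ^ B.length) →
      ∀ I : List (Fin (2*n)), I.length ≤ l →
        |XI n I (fun y => (f y)⁻¹) x| ≤ C * (P * ρ) ^ I.length := by
  have h0C : 0 < 1/C₀ := by positivity
  induction l with
  | zero =>
    refine ⟨C₀, hC₀.le, fun f U hU hf hfp x hx P ρ hP hρ hB I hI => ?_⟩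
    have : I = [] := List.length_eq_zero_iff.mp (by omega)
    subst this
    have h1 := hfp x hx
    simp only [XI, List.length_nil, pow_zero, mul_one]
    rw [abs_of_pos (by have := h0C.trans_le h1; positivity)]
    rw [inv_le_comm₀ (h0C.trans_le h1) hC₀]
    simpa using h1
  | succ l ih =>
    obtain ⟨C, hC, h⟩ := ih
    refine ⟨C + C₀ * (2^(l+1) * C), by positivity,
      fun f U hU hf hfp x hx P ρ hP hρ hB I hI => ?_⟩
    have ih' := h f U hU hf hfp x hx P ρ hP hρ (fun B h1 h2 => hB B h1 (by omega))
    have hPρ : 0 ≤ P * ρ := by positivity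
    rcases Nat.lt_or_ge I.length (l+1) with hl | hl
    · refine (ih' I (by omega)).trans ?_
      gcongr
      have : 0 ≤ C₀ * (2^(l+1) * C) := by positivity
      linarith
    have hIl : I.length = l + 1 := by omega
    obtain ⟨L, hL1, hL2, hL3⟩ := leibniz I
    have hfpos : ∀ y ∈ U, 0 < f y := fun y hy => h0C.trans_le (hfp y hy)
    have hu : ContDiffOn ℝ Sm (fun y => (f y)⁻¹) U := hf.inv fun y hy => (hfpos y hy).ne'
    have e := hL3 U (fun y => (f y)⁻¹) f hU hu hf x hx
    have e2 : XI n I (fun y => (f y)⁻¹ * f y) x = 0 := by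
      have : EqOn (fun y => (f y)⁻¹ * f y) (fun _ => (1:ℝ)) U := fun y hy =>
        inv_mul_cancel₀ (hfpos y hy).ne'
      rw [XI_congr I hU this hx, XI_const I (by rintro rfl; simp at hIl)]
    rw [e2] at e
    have hb : ∀ p ∈ L, |XI n p.1 (fun y => (f y)⁻¹) x * XI n p.2 f x| ≤
        C * (P * ρ) ^ (l+1) := by
      intro p hp
      obtain ⟨q1, q2⟩ := hL2 p hp
      rw [abs_mul]
      have a1 := ih' p.1 (by omega)
      have a2 := hB p.2 (by omega) (by omega)
      calc _ ≤ (C * (P*ρ)^p.1.length) * (P * ρ ^ p.2.length) :=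
            mul_le_mul a1 a2 (abs_nonneg _) (by positivity)
        _ ≤ (C * (P*ρ)^p.1.length) * (P * ρ) ^ p.2.length := by
            rw [mul_pow P ρ p.2.length]
            gcongr
            exact le_self_pow₀ hP (by omega)
        _ = _ := by rw [mul_assoc, ← pow_add, q2, hIl]
    have hs := list_abs_sum_le L _ _ hb
    have hLl : (L.length : ℝ) ≤ 2^(l+1) := by
      have : L.length ≤ 2^(l+1) := by rw [← hIl]; exact hL1.trans (Nat.sub_le _ _)
      exact_mod_cast this
    have hs2 : |XI n I (fun y => (f y)⁻¹) x| * f x ≤ 2^(l+1) * (C * (P*ρ)^(l+1)) := by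
      rw [← abs_of_pos (hfpos x hx), ← abs_mul]
      rw [eq_neg_of_add_eq_zero_left e.symm, abs_neg]
      exact hs.trans (by gcongr)
    have hs3 : |XI n I (fun y => (f y)⁻¹) x| * (1/C₀) ≤ 2^(l+1) * (C * (P*ρ)^(l+1)) :=
      (mul_le_mul_of_nonneg_left (hfp x hx) (abs_nonneg _)).trans hs2
    rw [mul_one_div, div_le_iff₀ hC₀] at hs3
    rw [hIl]
    have : 0 ≤ C * (P*ρ)^(l+1) := by positivity
    nlinarith

def Sg (n m : ℕ) (g : Vn n → ℝ) (x : Vn n) : ℝ :=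
  ∑ k ∈ Finset.range m, ∑ J : Fin (k+1) → Fin (2*n), |XI n (List.ofFn J) g x| ^ ex m (k+1)

lemma Sg_nonneg (n m : ℕ) (g : Vn n → ℝ) (x : Vn n) : 0 ≤ Sg n m g x :=
  Finset.sum_nonneg fun _ _ => Finset.sum_nonneg fun _ _ => by positivity

lemma ofFn_ex {α : Type*} (B : List α) {k : ℕ} (h : B.length = k) :
    ∃ J : Fin k → α, List.ofFn J = B := by
  subst h; exact ⟨B.get, List.ofFn_get B⟩

lemma le_Sg (n m : ℕ) (g : Vn n → ℝ) (x : Vn n) (B : List (Fin (2*n))) (h1 : 1 ≤ B.length)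
    (h2 : B.length ≤ m) : |XI n B g x| ^ ex m B.length ≤ Sg n m g x := by
  obtain ⟨k, hk⟩ : ∃ k, B.length = k + 1 := ⟨B.length - 1, by omega⟩
  obtain ⟨J, hJ⟩ : ∃ J : Fin (k+1) → Fin (2*n), List.ofFn J = B := ofFn_ex B hk
  rw [hk, ← hJ]
  refine le_trans ?_ (Finset.single_le_sum (f := fun k =>
    ∑ J : Fin (k+1) → Fin (2*n), |XI n (List.ofFn J) g x| ^ ex m (k+1))
    (fun _ _ => Finset.sum_nonneg fun _ _ => by positivity)
    (Finset.mem_range.mpr (by omega : k < m)))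
  exact Finset.single_le_sum (f := fun J : Fin (k+1) → Fin (2*n) =>
    |XI n (List.ofFn J) g x| ^ ex m (k+1)) (fun _ _ => by positivity) (Finset.mem_univ J)

lemma Sg_int (n m : ℕ) (hm : 0 < m) {g : Vn n → ℝ} (hg : ContDiff ℝ Sm g)
    (hc : HasCompactSupport g) : Integrable (Sg n m g) ∧
      ∫ x, Sg n m g x = ∑ k ∈ Finset.range m, Jk n m (k+1) g := by
  have hi : ∀ k, ∀ J : Fin (k+1) → Fin (2*n),
      Integrable (fun x => |XI n (List.ofFn J) g x| ^ ex m (k+1)) := fun k J =>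
    abs_rpow_int (XI_contDiff _ hg).continuous (XI_hcs _ hc) (ex_pos hm (by omega))
  have hi2 : ∀ k, Integrable (fun x => ∑ J : Fin (k+1) → Fin (2*n),
      |XI n (List.ofFn J) g x| ^ ex m (k+1)) := fun k =>
    integrable_finsetSum _ fun J _ => hi k J
  constructor
  · exact integrable_finsetSum _ fun k _ => hi2 k
  · simp only [Sg]
    rw [integral_finsetSum _ fun k _ => hi2 k]
    refine Finset.sum_congr rfl fun k _ => ?_
    rw [integral_finsetSum _ fun J _ => hi k J]
    rfl

lemma inv_int (n m : ℕ) (hm : 0 < m) {C₀ : ℝ} (hC₀ : 0 < C₀) : ∃ C : ℝ, 0 ≤ C ∧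
    ∀ (f g : Vn n → ℝ) (U : Set (Vn n)) (P : ℝ), IsOpen U → ContDiffOn ℝ Sm f U →
      (∀ x ∈ U, 1/C₀ ≤ f x) → 1 ≤ P → ContDiff ℝ Sm g → HasCompactSupport g →
      EqOn f (fun y => P * g y) U →
      ∀ I : List (Fin (2*n)), I.length = m →
        ∫ x in U, ‖XI n I (fun y => (f y)⁻¹) x‖^2 ≤
          C * P ^ (2*m) * ∑ k ∈ Finset.range m, Jk n m (k+1) g := by
  obtain ⟨C, hC, h⟩ := inv_rec n hC₀ m
  refine ⟨C^2, by positivity, fun f g U P hU hf hfp hP hg hc hfg I hI => ?_⟩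
  obtain ⟨hi, he⟩ := Sg_int n m hm hg hc
  have hmR : (0:ℝ) < m := by exact_mod_cast hm
  have key : ∀ x ∈ U, ‖XI n I (fun y => (f y)⁻¹) x‖^2 ≤ C^2 * P^(2*m) * Sg n m g x := by
    intro x hx
    have hS := Sg_nonneg n m g x
    set ρ : ℝ := Sg n m g x ^ (1/(2*m) : ℝ) with hρ
    have hρ0 : 0 ≤ ρ := by positivity
    have hb := h f U hU hf hfp x hx P ρ hP hρ0 (fun B h1 h2 => by
      rw [XI_congr B hU hfg hx, XI_cmul]
      simp only
      rw [abs_mul, abs_of_pos (by linarith : 0 < P)]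
      gcongr
      have h3 := rpow_ex_cancel (w := 1) hm h1 (abs_nonneg (XI n B g x))
      rw [Real.rpow_one] at h3
      rw [← h3, hρ, ← Real.rpow_natCast, ← Real.rpow_mul hS]
      have : (1:ℝ) * B.length / (2*m) = 1/(2*m) * B.length := by ring
      rw [this]
      exact Real.rpow_le_rpow (by positivity) (le_Sg n m g x B h1 h2) (by positivity)) I hI.le
    have hρm : ρ ^ (2*m) = Sg n m g x := by
      rw [hρ, ← Real.rpow_natCast, ← Real.rpow_mul hS]
      push_cast
      rw [one_div_mul_cancel (by positivity), Real.rpow_one]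
    rw [Real.norm_eq_abs]
    calc _ ≤ (C * (P*ρ)^I.length)^2 := by gcongr
      _ = C^2 * P^(2*m) * ρ^(2*m) := by rw [hI]; ring
      _ = _ := by rw [hρm]
  have hi2 := hi.const_mul (C^2 * P^(2*m))
  calc _ ≤ ∫ x in U, C^2 * P^(2*m) * Sg n m g x := by
        refine integral_mono_of_nonneg (Eventually.of_forall fun x => by positivity)
          hi2.integrableOn ?_
        exact (ae_restrict_iff' hU.measurableSet).mpr (Eventually.of_forall key)
    _ ≤ ∫ x, C^2 * P^(2*m) * Sg n m g x :=
        setIntegral_le_integral hi2 (Eventually.of_forall fun x =>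
          mul_nonneg (by positivity) (Sg_nonneg n m g x))
    _ = _ := by rw [integral_const_mul, he]

end FS

namespace FS
open Set Filter Topology

open scoped Manifold in
lemma cutoff {n : ℕ} {D K : Set (Vn n)} (hD : IsOpen D) (hDb : IsBounded D) (hK : IsClosed K)
    (hKD : K ⊆ D) : ∃ χ : Vn n → ℝ, ContDiff ℝ Sm χ ∧ HasCompactSupport χ ∧ tsupport χ ⊆ D ∧
      ∀ x ∈ K, χ x = 1 := by
  obtain ⟨χ, h0, h1, -⟩ := exists_contMDiffMap_zero_one_nhds_of_isClosed (n := ⊤)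
    𝓘(ℝ, Vn n) hD.isClosed_compl hK
    (disjoint_compl_left_iff_subset.mpr hKD)
  have ht : tsupport χ ⊆ D := by
    intro x hx
    by_contra hxD
    have : (χ : Vn n → ℝ) =ᶠ[𝓝 x] 0 := (eventually_nhdsSet_iff_forall.mp h0) x hxD
    exact (notMem_tsupport_iff_eventuallyEq.mpr this) hx
  refine ⟨χ, ?_, ?_, ht, fun x hx => h1.self_of_nhdsSet x hx⟩
  · exact χ.contMDiff.contDiff
  · exact hDb.isCompact_closure.of_isClosed_subset (isClosed_tsupport _)
      (ht.trans subset_closure)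

lemma cut_smooth {n : ℕ} {D : Set (Vn n)} (hD : IsOpen D) {χ h : Vn n → ℝ}
    (hχ : ContDiff ℝ Sm χ) (ht : tsupport χ ⊆ D) (hh : ContDiffOn ℝ Sm h D) :
    ContDiff ℝ Sm (fun y => χ y * h y) := by
  rw [contDiff_iff_contDiffAt]
  intro x
  by_cases hx : x ∈ tsupport χ
  · exact hχ.contDiffAt.mul (hh.contDiffAt (hD.mem_nhds (ht hx)))
  · have : (fun y => χ y * h y) =ᶠ[𝓝 x] fun _ => 0 := by
      filter_upwards [notMem_tsupport_iff_eventuallyEq.mp hx] with y hy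
      simp [hy]
    exact contDiffAt_const.congr_of_eventuallyEq this

/-- pointwise sum of squares -/
def Tq (n s : ℕ) (h : Vn n → ℝ) (x : Vn n) : ℝ :=
  ∑ t ∈ Finset.range (s+1), ∑ I : Fin t → Fin (2*n), ‖XI n (List.ofFn I) h x‖^2

lemma Tq_nonneg (n s : ℕ) (h : Vn n → ℝ) (x : Vn n) : 0 ≤ Tq n s h x :=
  Finset.sum_nonneg fun _ _ => Finset.sum_nonneg fun _ _ => by positivity

lemma le_Tq (n s : ℕ) (h : Vn n → ℝ) (x : Vn n) (B : List (Fin (2*n)))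
    (h2 : B.length ≤ s) : |XI n B h x| ≤ √(Tq n s h x) := by
  apply Real.le_sqrt_of_sq_le
  obtain ⟨J, hJ⟩ := ofFn_ex B rfl
  rw [← Real.norm_eq_abs]
  refine le_trans ?_ (Finset.single_le_sum (f := fun t =>
    ∑ I : Fin t → Fin (2*n), ‖XI n (List.ofFn I) h x‖^2)
    (fun _ _ => Finset.sum_nonneg fun _ _ => by positivity)
    (Finset.mem_range.mpr (by omega : B.length < s+1)))
  refine le_trans (le_of_eq ?_) (Finset.single_le_sum (f := fun I : Fin B.length → Fin (2*n) =>
    ‖XI n (List.ofFn I) h x‖^2) (fun _ _ => by positivity) (Finset.mem_univ J))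
  simp only [hJ]

lemma Tq_int {n : ℕ} (s : ℕ) {D : Set (Vn n)} (hD : IsOpen D) (hDb : IsBounded D)
    {h : Vn n → ℝ} (hh : ContDiffOn ℝ Sm h (closure D)) : IntegrableOn (Tq n s h) D ∧
      ∫ x in D, Tq n s h x = fsNormSq n D s h := by
  have hi := fun I => XI_intOn hD hDb hh I
  have hi2 : ∀ t, IntegrableOn (fun x => ∑ I : Fin t → Fin (2*n),
      ‖XI n (List.ofFn I) h x‖^2) D := fun t =>
    integrable_finsetSum _ fun J _ => hi _
  constructor
  · exact integrable_finsetSum _ fun k _ => hi2 k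
  · simp only [Tq, fsNormSq]
    rw [integral_finsetSum _ fun k _ => hi2 k]
    refine Finset.sum_congr rfl fun k _ => ?_
    rw [integral_finsetSum _ fun J _ => hi _]

lemma cut_pw {n : ℕ} (s : ℕ) {D : Set (Vn n)} (hD : IsOpen D) {χ : Vn n → ℝ}
    (hχ : ContDiff ℝ Sm χ) (hχc : HasCompactSupport χ) : ∃ C : ℝ, 0 ≤ C ∧
      ∀ h : Vn n → ℝ, ContDiffOn ℝ Sm h D → ∀ I : List (Fin (2*n)), I.length ≤ s →
        ∀ x ∈ D, (XI n I (fun y => χ y * h y) x)^2 ≤ C * Tq n s h x := by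
  have hb : ∀ A : List (Fin (2*n)), ∃ c, ∀ x, |XI n A χ x| ≤ c := fun A =>
    (XI_contDiff A hχ).continuous.bounded_above_of_compact_support (XI_hcs A hχc)
  choose c hc using hb
  obtain ⟨M, hM⟩ := ((List.finite_length_le (Fin (2*n)) s).image c).bddAbove
  have hM' : ∀ A : List (Fin (2*n)), A.length ≤ s → ∀ x, |XI n A χ x| ≤ M := fun A hA x =>
    (hc A x).trans (hM ⟨A, hA, rfl⟩)
  have hM0 : 0 ≤ M := (abs_nonneg _).trans (hM' [] (by simp) 0)
  refine ⟨((1 + 2^s) * M)^2, by positivity, fun h hh I hI x hx => ?_⟩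
  obtain ⟨L, hL1, hL2, hL3⟩ := leibniz I
  rw [hL3 D χ h hD hχ.contDiffOn hh x hx]
  set T := √(Tq n s h x) with hT
  have hT0 : 0 ≤ T := Real.sqrt_nonneg _
  have hTT : Tq n s h x = T^2 := (Real.sq_sqrt (Tq_nonneg n s h x)).symm
  have h1 : |(L.map (fun p => XI n p.1 χ x * XI n p.2 h x)).sum| ≤ L.length * (M * T) := by
    apply list_abs_sum_le
    intro p hp
    obtain ⟨q1, q2⟩ := hL2 p hp
    rw [abs_mul]
    exact mul_le_mul (hM' _ (by omega) x) (le_Tq n s h x _ (by omega)) (abs_nonneg _) hM0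
  have h2 : |XI n I χ x * h x| ≤ M * T := by
    rw [abs_mul]
    exact mul_le_mul (hM' _ hI x) (le_Tq n s h x [] (by simp)) (abs_nonneg _) hM0
  have hLl : (L.length : ℝ) ≤ 2^s := by
    have : L.length ≤ 2^s := (hL1.trans (Nat.sub_le _ _)).trans
      (Nat.pow_le_pow_right (by norm_num) hI)
    exact_mod_cast this
  have h3 : |XI n I χ x * h x + (L.map (fun p => XI n p.1 χ x * XI n p.2 h x)).sum| ≤
      (1 + 2^s) * M * T := by
    refine (abs_add_le _ _).trans ?_
    have : (L.length : ℝ) * (M * T) ≤ 2^s * (M*T) := by gcongr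
    linarith
  rw [hTT, ← mul_pow, ← sq_abs]
  gcongr

lemma cut_int {n : ℕ} (s : ℕ) {D : Set (Vn n)} (hD : IsOpen D) (hDb : IsBounded D)
    {χ : Vn n → ℝ} (hχ : ContDiff ℝ Sm χ) (hχc : HasCompactSupport χ) (ht : tsupport χ ⊆ D) :
    ∃ C : ℝ, 0 ≤ C ∧
      ∀ h : Vn n → ℝ, ContDiffOn ℝ Sm h (closure D) → fsNormSq n D s h ≤ 1 →
        ∀ I : List (Fin (2*n)), I.length ≤ s →
          (∫ x, (XI n I (fun y => χ y * h y) x)^2) ≤ C ∧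
          (∫ x, |XI n I (fun y => χ y * h y) x|) ≤ C := by
  obtain ⟨C, hC, hp⟩ := cut_pw s hD hχ hχc
  refine ⟨C + volume.real D, by positivity, fun h hh h1 I hI => ?_⟩
  obtain ⟨hi, he⟩ := Tq_int s hD hDb hh
  have hz : ∀ x ∉ D, XI n I (fun y => χ y * h y) x = 0 := by
    intro x hx
    by_contra h0
    exact hx (ht (tsupport_mul_subset_left (XI_tsupport I _ (subset_tsupport _ h0))))
  have hpw := hp h (hh.mono subset_closure) I hI
  have hCT : C * ∫ x in D, Tq n s h x ≤ C := by
    rw [he]; nlinarith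
  have hv : IntegrableOn (fun _ : Vn n => (1:ℝ)) D :=
    integrableOn_const hDb.measure_lt_top.ne
  constructor
  · rw [← setIntegral_eq_integral_of_forall_compl_eq_zero (s := D)
      (fun x hx => by simp [hz x hx])]
    have : ∫ x in D, (XI n I (fun y => χ y * h y) x)^2 ≤ ∫ x in D, C * Tq n s h x := by
      refine integral_mono_of_nonneg (Eventually.of_forall fun x => by positivity)
        (hi.const_mul C) ?_
      exact (ae_restrict_iff' hD.measurableSet).mpr (Eventually.of_forall hpw)
    rw [integral_const_mul] at this
    have : 0 ≤ volume.real D := measureReal_nonneg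
    linarith
  · rw [← setIntegral_eq_integral_of_forall_compl_eq_zero (s := D)
      (fun x hx => by simp [hz x hx])]
    have : ∫ x in D, |XI n I (fun y => χ y * h y) x| ≤ ∫ x in D, (C * Tq n s h x + 1) := by
      refine integral_mono_of_nonneg (Eventually.of_forall fun x => by positivity)
        ((hi.const_mul C).add hv) ?_
      refine (ae_restrict_iff' hD.measurableSet).mpr (Eventually.of_forall fun x hx => ?_)
      have a := hpw x hx
      rw [← sq_abs] at a
      show |XI n I (fun y => χ y * h y) x| ≤ C * Tq n s h x + 1
      nlinarith [sq_nonneg (|XI n I (fun y => χ y * h y) x| - 1),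
        abs_nonneg (XI n I (fun y => χ y * h y) x)]
    have e2 : ∫ x in D, (C * Tq n s h x + 1) = C * (∫ x in D, Tq n s h x) + volume.real D := by
      rw [integral_add (hi.const_mul C) hv, integral_const_mul]
      simp
    linarith

lemma gn_sum (n m : ℕ) (hm : 0 < m) : ∃ C : ℝ, 0 ≤ C ∧
    ∀ g : Vn n → ℝ, ContDiff ℝ Sm g → HasCompactSupport g → (∀ x, |g x| ≤ 1) →
      ∑ k ∈ Finset.range m, Jk n m (k+1) g ≤ C * Jk n m m g := by
  have : ∀ k, ∃ C : ℝ, 0 ≤ C ∧ (k < m →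
    ∀ g : Vn n → ℝ, ContDiff ℝ Sm g → HasCompactSupport g → (∀ x, |g x| ≤ 1) →
      Jk n m (k+1) g ≤ C * Jk n m m g) := by
    intro k
    by_cases hk : k < m
    · obtain ⟨C, hC, h⟩ := gn (n := n) m (m - (k+1)) k (by omega)
      exact ⟨C, hC, fun _ => h⟩
    · exact ⟨0, le_rfl, fun h => absurd h hk⟩
  choose C hC h using this
  refine ⟨∑ k ∈ Finset.range m, C k, Finset.sum_nonneg fun k _ => hC k,
    fun g hg hc hg1 => ?_⟩
  rw [Finset.sum_mul]
  exact Finset.sum_le_sum fun k hk => h k (Finset.mem_range.mp hk) g hg hc hg1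

lemma fsNormSq_nonneg (n : ℕ) (D : Set (Vn n)) (s : ℕ) (f : Vn n → ℝ) :
    0 ≤ fsNormSq n D s f :=
  Finset.sum_nonneg fun _ _ => Finset.sum_nonneg fun _ _ =>
    integral_nonneg fun _ => by positivity

lemma main_m {n s : ℕ} (hn : 1 ≤ n) (hs : 2*n+2 ≤ s) {D D' : Set (Vn n)} (hD : IsOpen D)
    (hDb : IsBounded D) (hD' : IsOpen D') (hsub : closure D' ⊆ D) {C₀ : ℝ} (hC₀ : 0 < C₀)
    (m : ℕ) (hms : m ≤ s) : ∃ C : ℝ, 0 ≤ C ∧ ∀ f : Vn n → ℝ, ContDiffOn ℝ Sm f (closure D) →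
      (∀ x ∈ closure D', 1/C₀ ≤ f x) → ∀ I : List (Fin (2*n)), I.length = m →
        ∫ x in D', ‖XI n I (fun y => (f y)⁻¹) x‖^2 ≤ C * (1 + fsNorm n D s f)^(2*s) := by
  have hP1 : ∀ f : Vn n → ℝ, 1 ≤ 1 + fsNorm n D s f := fun f => by
    have : 0 ≤ fsNorm n D s f := Real.sqrt_nonneg _
    linarith
  rcases Nat.eq_zero_or_pos m with rfl | hm
  · refine ⟨C₀^2 * volume.real D', by positivity, fun f hf hfp I hI => ?_⟩
    have : I = [] := List.length_eq_zero_iff.mp hI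
    subst this
    have hfin : volume D' < ⊤ := (hDb.subset (subset_closure.trans hsub)).measure_lt_top
    have : ∫ x in D', ‖XI n [] (fun y => (f y)⁻¹) x‖^2 ≤ ∫ x in D', C₀^2 := by
      refine integral_mono_of_nonneg (Eventually.of_forall fun x => by positivity)
        (integrableOn_const hfin.ne) ?_
      refine (ae_restrict_iff' hD'.measurableSet).mpr (Eventually.of_forall fun x hx => ?_)
      have h1 := hfp x (subset_closure hx)
      have h0 : 0 < 1/C₀ := by positivity
      have h2 : 0 < f x := h0.trans_le h1
      simp only [XI]
      rw [Real.norm_of_nonneg (by positivity)]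
      gcongr
      rw [inv_le_comm₀ h2 hC₀]
      simpa using h1
    refine this.trans ?_
    rw [setIntegral_const, smul_eq_mul, mul_comm]
    exact le_mul_of_one_le_right (by positivity) (one_le_pow₀ (hP1 f))
  obtain ⟨χ, hχ, hχc, ht, hχ1⟩ := cutoff hD hDb isClosed_closure hsub
  obtain ⟨Cc, hCc, hcut⟩ := cut_int s hD hDb hχ hχc ht
  obtain ⟨L1, L2, hL1, hL2, hsup⟩ := sup_bound hn
  obtain ⟨Cg, hCg, hgn⟩ := gn_sum n m hm
  obtain ⟨Ci, hCi, hinv⟩ := inv_int n m hm hC₀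
  set K : ℝ := 1 + 2 * Cc with hK
  have hK1 : 1 ≤ K := by linarith
  set N : ℝ := (Fintype.card (Fin m → Fin (2*n)) : ℝ) with hN
  refine ⟨Ci * K^(2*m) * (Cg * (N * Cc)), by positivity, fun f hf hfp I hI => ?_⟩
  set P := 1 + fsNorm n D s f with hP
  have hP1' : 1 ≤ P := hP1 f
  have hP0 : 0 < P := by linarith
  set h : Vn n → ℝ := fun y => P⁻¹ * f y with hh
  have hhs : ContDiffOn ℝ Sm h (closure D) := contDiffOn_const.mul hf
  have hn1 : fsNormSq n D s h ≤ 1 := by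
    have e : fsNormSq n D s h = (P⁻¹)^2 * fsNormSq n D s f := by
      simp only [fsNormSq, hh, XI_cmul, norm_mul, mul_pow, integral_const_mul, Finset.mul_sum]
      simp [hP0.le]
    have e2 : fsNormSq n D s f ≤ P^2 := by
      have h1 : fsNorm n D s f ^ 2 = fsNormSq n D s f := Real.sq_sqrt (fsNormSq_nonneg _ _ _ _)
      have : 0 ≤ fsNorm n D s f := Real.sqrt_nonneg _
      nlinarith
    rw [e, inv_pow, inv_mul_le_iff₀ (by positivity)]
    linarith
  set g : Vn n → ℝ := fun y => χ y * h y with hg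
  have hgs : ContDiff ℝ Sm g := cut_smooth hD hχ ht (hhs.mono subset_closure)
  have hgc : HasCompactSupport g := hχc.mul_right
  have hcutg := hcut h hhs hn1
  have hgK : ∀ z, |g z| ≤ K := by
    intro z
    refine (hsup g hgs hgc z).trans ?_
    have hi : ∀ J, Integrable (fun x => |XI n J g x|) := fun J =>
      (int_cs (XI_contDiff J hgs).continuous (XI_hcs J hgc)).abs
    rw [integral_add (hi _) (hi _)]
    have a1 := (hcutg L1 (by omega)).2
    have a2 := (hcutg L2 (by omega)).2
    linarith
  set G : Vn n → ℝ := fun y => K⁻¹ * g y with hG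
  have hGs : ContDiff ℝ Sm G := contDiff_const.mul hgs
  have hGc : HasCompactSupport G := hgc.mul_left
  have hG1 : ∀ x, |G x| ≤ 1 := by
    intro x
    rw [hG]
    simp only
    rw [abs_mul, abs_of_pos (by positivity), inv_mul_le_iff₀ (by positivity)]
    simpa using hgK x
  have hJ : Jk n m m G ≤ N * Cc := by
    unfold Jk
    have : ∀ J ∈ (Finset.univ : Finset (Fin m → Fin (2*n))),
        ∫ x, |XI n (List.ofFn J) G x| ^ ex m m ≤ Cc := by
      intro J _
      have em : ex m m = 2 := by
        unfold ex
        have : (m:ℝ) ≠ 0 := by positivity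
        field_simp
      have a := (hcutg (List.ofFn J) (by simpa using hms)).1
      have e : ∀ x, |XI n (List.ofFn J) G x| ^ ex m m =
          (K⁻¹)^2 * (XI n (List.ofFn J) g x)^2 := by
        intro x
        rw [em, hG, XI_cmul]
        simp only
        rw [Real.rpow_ofNat, sq_abs]
        ring
      simp only [e]
      rw [integral_const_mul]
      refine le_trans ?_ a
      apply mul_le_of_le_one_left (integral_nonneg fun x => by positivity)
      rw [inv_pow]
      exact inv_le_one_of_one_le₀ (one_le_pow₀ hK1)
    have := Finset.sum_le_card_nsmul _ _ _ this
    rw [nsmul_eq_mul] at this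
    exact this
  have hsum := (hgn G hGs hGc hG1).trans (mul_le_mul_of_nonneg_left hJ hCg)
  have hD'D : D' ⊆ closure D := subset_closure.trans (hsub.trans subset_closure)
  have heq : EqOn f (fun y => (P * K) * G y) D' := by
    intro y hy
    simp only [hG, hg, hh, hχ1 y (subset_closure hy)]
    field_simp
  have hfin := hinv f G D' (P*K) hD' (hf.mono hD'D) (fun x hx => hfp x (subset_closure hx))
    (by nlinarith) hGs hGc heq I hI
  refine hfin.trans ?_
  calc Ci * (P*K)^(2*m) * ∑ k ∈ Finset.range m, Jk n m (k+1) G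
      ≤ Ci * (P*K)^(2*m) * (Cg * (N * Cc)) := by gcongr
    _ = Ci * K^(2*m) * (Cg * (N * Cc)) * P^(2*m) := by ring
    _ ≤ _ := by
      gcongr

end FS

/-- `‖1/f‖_{D',s} ≤ C (1 + ‖f‖_{D,s})^s` when `f ≥ 1/C₀` on `cl D'`. -/
theorem statement4 (n s : ℕ) (hn : 1 ≤ n) (hs : 2*n+3 ≤ s)
    (D D' : Set (Fin (2*n+1) → ℝ)) (hD : IsOpen D) (hDb : IsBounded D)
    (hD' : IsOpen D') (hD'b : IsBounded D') (hsub : closure D' ⊆ D)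
    (C₀ : ℝ) (hC₀ : 0 < C₀) :
    ∃ C > (0:ℝ), ∀ f : (Fin (2*n+1) → ℝ) → ℝ,
      ContDiffOn ℝ (⊤:ℕ∞) f (closure D) →
      (∀ x ∈ closure D', 1/C₀ ≤ f x) →
      fsNorm n D' s (fun x => (f x)⁻¹) ≤ C * (1 + fsNorm n D s f)^s := by
  have hm : ∀ m, ∃ C : ℝ, 0 ≤ C ∧ (m ≤ s → ∀ f : FS.Vn n → ℝ,
      ContDiffOn ℝ FS.Sm f (closure D) →
      (∀ x ∈ closure D', 1/C₀ ≤ f x) → ∀ I : List (Fin (2*n)), I.length = m →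
        ∫ x in D', ‖XI n I (fun y => (f y)⁻¹) x‖^2 ≤ C * (1 + fsNorm n D s f)^(2*s)) := by
    intro m
    by_cases hms : m ≤ s
    · obtain ⟨C, hC, h⟩ := FS.main_m hn (by omega) hD hDb hD' hsub hC₀ m hms
      exact ⟨C, hC, fun _ => h⟩
    · exact ⟨0, le_rfl, fun h => absurd h hms⟩
  choose C hC h using hm
  set M : ℝ := ∑ t ∈ Finset.range (s+1), (Fintype.card (Fin t → Fin (2*n)) : ℝ) * C t with hM
  have hM0 : 0 ≤ M := Finset.sum_nonneg fun t _ => mul_nonneg (by positivity) (hC t)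
  refine ⟨√M + 1, by positivity, fun f hf hfp => ?_⟩
  have hP0 : 0 ≤ 1 + fsNorm n D s f := by
    have : 0 ≤ fsNorm n D s f := Real.sqrt_nonneg _
    linarith
  have hsq : fsNormSq n D' s (fun x => (f x)⁻¹) ≤ M * (1 + fsNorm n D s f)^(2*s) := by
    unfold fsNormSq
    rw [hM, Finset.sum_mul]
    refine Finset.sum_le_sum fun t ht => ?_
    have := Finset.sum_le_card_nsmul (Finset.univ : Finset (Fin t → Fin (2*n)))
      (fun I => ∫ x in D', ‖XI n (List.ofFn I) (fun y => (f y)⁻¹) x‖^2) _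
      (fun I _ => h t (by have := Finset.mem_range.mp ht; omega) f hf hfp (List.ofFn I)
        (by simp))
    rw [nsmul_eq_mul] at this
    rw [mul_assoc]
    exact this
  have e : M * (1 + fsNorm n D s f)^(2*s) = (√M * (1 + fsNorm n D s f)^s)^2 := by
    rw [mul_pow, Real.sq_sqrt hM0]; ring
  rw [e] at hsq
  have h2 : fsNorm n D' s (fun x => (f x)⁻¹) ≤ √M * (1 + fsNorm n D s f)^s := by
    unfold fsNorm at *
    exact Real.sqrt_le_iff.mpr ⟨by positivity, hsq⟩
  refine h2.trans ?_
  gcongr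
  linarith
end
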